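/- Let f be a quasiperiodically forced circle homeomorphism over an irrational ω with lift F whose fibered rotation number is ρ. Suppose f is mode-locked: for some ε > 0 the fibered rotation numbers of both F_ε and F_{−ε} equal ρ. Then there exist an integer N ≥ 1 and a continuous injective map e : T¹ × [0,1] → T¹×T¹ such that the closed annulus 𝒜 := e(T¹×[0,1]) is mapped into its own interior by the N-th iterate of f, i.e. f^N(𝒜) ⊆ int(𝒜). -/

import Mathlib

open Filter Topology MeasureTheory
open scoped ENNReal

noncomputable section

/-- The circle `T¹ = ℝ/ℤ`. -/
abbrev T1 := AddCircle (1 : ℝ)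

/-- Fiberwise iterate of the skew product: `fiberIter ω F n θ x = F^n_θ(x)`. -/
def fiberIter (ω : ℝ) (F : T1 → ℝ → ℝ) : ℕ → T1 → ℝ → ℝ
  | 0, _, x => x
  | n + 1, θ, x => fiberIter ω F n (θ + (ω : T1)) (F θ x)

/-- `F` is (the fiber part of) a lift of a quasiperiodically forced circle homeomorphism
over `ω`: `F(θ,x) = (θ+ω, F_θ(x))`, each `F_θ` a strictly increasing homeomorphism of `ℝ`
commuting with `x ↦ x+1`. -/
structure IsQpfLift (ω : ℝ) (F : T1 → ℝ → ℝ) : Prop where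
  cont : Continuous fun p : T1 × ℝ => F p.1 p.2
  mono : ∀ θ, StrictMono (F θ)
  surj : ∀ θ, Function.Surjective (F θ)
  per  : ∀ θ x, F θ (x + 1) = F θ x + 1

/-- `ρ` is the fibered rotation number of the lift `F`. -/
def HasRotNum (ω : ℝ) (F : T1 → ℝ → ℝ) (ρ : ℝ) : Prop :=
  ∀ θ x, Tendsto (fun n : ℕ => (fiberIter ω F n θ x - x) / n) atTop (𝓝 ρ)

/-! Mode-locking keeps the orbits of `F_ε` and `F_{-ε}` within a bounded distance of the rigid
motion `x + nρ`. The infimum of all forward images of a horizontal line under `F_{-ε}`, moving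
with velocity `ρ`, is then an upper semicontinuous graph that `F` pushes upwards by `ε`. If `1`,
`ω` and `ρ` were rationally independent, the theorem of Kronecker would give returns to nearby
fibers at levels rising by only `ε/2` each time, while the graphs climb by `ε`, against the
bounded deviation. Hence `q (ρ - σω)` is an integer for some rational `σ` and some `q ≥ 1`; on the
cover of the torus by `T¹ × ℝ` in which horizontal circles have slope `σ`, the `q`-th iterate
acquires rotation number `0`.

In that situation some orbit stays trapped just below one of these graphs, and the supremum of
nearby orbit points of `F_{ε/2}` is a lower semicontinuous graph that `F` pushes downwards. By
minimality of the rotation, enough iterates move a semicontinuous graph past itself so that a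
continuous curve fits strictly in between. The strip bounded by two such curves is mapped into its
interior. It lies between two of the lower graphs whose levels differ by no more than the smallest
vertical deck translation of the cover, so it projects injectively to an annulus. -/

section Iterates

variable {ω : ℝ} {F G : T1 → ℝ → ℝ}

theorem fiberIter_add (ω : ℝ) (F : T1 → ℝ → ℝ) (m n : ℕ) (θ : T1) (x : ℝ) :
    fiberIter ω F (m + n) θ x =
      fiberIter ω F n (θ + m • (ω : T1)) (fiberIter ω F m θ x) := by
  induction m generalizing θ x with
  | zero => simp [fiberIter]
  | succ m ih =>
    rw [Nat.succ_add, fiberIter, fiberIter, ih, succ_nsmul', add_assoc]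

theorem fiberIter_succ_right (ω : ℝ) (F : T1 → ℝ → ℝ) (n : ℕ) (θ : T1) (x : ℝ) :
    fiberIter ω F (n + 1) θ x = F (θ + n • (ω : T1)) (fiberIter ω F n θ x) :=
  fiberIter_add ω F n 1 θ x

theorem coe_natCast_mul (n : ℕ) (ω : ℝ) : ((n * ω : ℝ) : T1) = n • (ω : T1) := by
  rw [← nsmul_eq_mul, AddCircle.coe_nsmul]

theorem fiberIter_mul (ω : ℝ) (F : T1 → ℝ → ℝ) (m n : ℕ) :
    fiberIter ω F (m * n) = fiberIter (m * ω) (fiberIter ω F m) n := by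
  induction n with
  | zero => rfl
  | succ n ih =>
    ext θ x
    rw [Nat.mul_succ, Nat.add_comm, fiberIter_add, ih, fiberIter, coe_natCast_mul]

theorem fiberIter_strictMono (hF : ∀ θ, StrictMono (F θ)) (n : ℕ) (θ : T1) :
    StrictMono (fiberIter ω F n θ) := by
  induction n generalizing θ with
  | zero => exact strictMono_id
  | succ n ih => exact (ih _).comp (hF θ)

theorem continuous_fiberIter (hF : Continuous fun p : T1 × ℝ => F p.1 p.2) (n : ℕ) :
    Continuous fun p : T1 × ℝ => fiberIter ω F n p.1 p.2 := by
  induction n with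
  | zero => exact continuous_snd
  | succ n ih => exact ih.comp ((continuous_fst.add continuous_const).prodMk hF)

theorem fiberIter_le_fiberIter (hG : ∀ θ, Monotone (G θ)) {a : T1}
    (h : ∀ θ x, F θ x ≤ G (θ + a) x) (n : ℕ) (θ : T1) {x y : ℝ} (hxy : x ≤ y) :
    fiberIter ω F n θ x ≤ fiberIter ω G n (θ + a) y := by
  induction n generalizing θ x y with
  | zero => exact hxy
  | succ n ih =>
    have := ih (θ + ω) ((h θ x).trans (hG _ hxy))
    rwa [add_right_comm] at this

theorem fiberIter_add_of_equivariant {a : T1} {b : ℝ}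
    (h : ∀ θ x, F (θ + a) (x + b) = F θ x + b) (n : ℕ) (θ : T1) (x : ℝ) :
    fiberIter ω F n (θ + a) (x + b) = fiberIter ω F n θ x + b := by
  induction n generalizing θ x with
  | zero => rfl
  | succ n ih => rw [fiberIter, fiberIter, h, add_right_comm, ih]

end Iterates

section Constructions

variable {ω : ℝ} {F : T1 → ℝ → ℝ}

/-- The vertical perturbation `F_s` of `F`. -/
def shift (F : T1 → ℝ → ℝ) (s : ℝ) : T1 → ℝ → ℝ := fun θ x => F θ x + s

/-- The conjugate of `F` by `x ↦ -x`; it exchanges the upper and the lower side of a curve. -/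
def reflect (F : T1 → ℝ → ℝ) : T1 → ℝ → ℝ := fun θ x => -F θ (-x)

theorem fiberIter_reflect (ω : ℝ) (F : T1 → ℝ → ℝ) (n : ℕ) (θ : T1) (x : ℝ) :
    fiberIter ω (reflect F) n θ x = -fiberIter ω F n θ (-x) := by
  induction n generalizing θ x with
  | zero => exact (neg_neg x).symm
  | succ n ih => rw [fiberIter, fiberIter, ih, reflect, neg_neg]

namespace IsQpfLift

protected theorem shift (hF : IsQpfLift ω F) (s : ℝ) : IsQpfLift ω (shift F s) where
  cont := hF.cont.add continuous_const
  mono θ := (hF.mono θ).add_const s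
  surj θ := (add_right_surjective s).comp (hF.surj θ)
  per θ x := by simp only [shift, hF.per, add_right_comm]

protected theorem reflect (hF : IsQpfLift ω F) : IsQpfLift ω (reflect F) where
  cont := (hF.cont.comp (continuous_fst.prodMk continuous_snd.neg)).neg
  mono θ x y hxy := neg_lt_neg (hF.mono θ (neg_lt_neg hxy))
  surj θ := neg_surjective.comp ((hF.surj θ).comp neg_surjective)
  per θ x := by
    have := hF.per θ (-(x + 1))
    rw [neg_add_rev, neg_add_cancel_comm] at this
    simp only [reflect, this, neg_add_rev]
    ring

theorem map_add_int (hF : IsQpfLift ω F) (θ : T1) (x : ℝ) (j : ℤ) :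
    F θ (x + j) = F θ x + j :=
  AddConstMapClass.map_add_int (⟨F θ, hF.per θ⟩ : AddConstMap ℝ ℝ 1 1) x j

theorem iterate (hF : IsQpfLift ω F) (n : ℕ) : IsQpfLift (n * ω) (fiberIter ω F n) where
  cont := continuous_fiberIter hF.cont n
  mono := fiberIter_strictMono hF.mono n
  surj θ := by
    induction n generalizing θ with
    | zero => exact Function.surjective_id
    | succ n ih => exact (ih _).comp (hF.surj θ)
  per θ x := by
    have := fiberIter_add_of_equivariant (ω := ω) (F := F) (a := 0) (b := 1)
      (fun θ x => by rw [add_zero, hF.per]) n θ x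
    rwa [add_zero] at this

theorem fiberIter_shift_mono (hF : IsQpfLift ω F) {s t : ℝ} (hst : s ≤ t) (n : ℕ) (θ : T1)
    {x y : ℝ} (hxy : x ≤ y) :
    fiberIter ω (shift F s) n θ x ≤ fiberIter ω (shift F t) n θ y := by
  have := fiberIter_le_fiberIter (ω := ω) (F := shift F s) (a := 0)
    (fun θ => ((hF.shift t).mono θ).monotone)
    (fun θ x => by rw [add_zero]; exact add_le_add_right hst (F θ x)) n θ hxy
  rwa [add_zero] at this

theorem fiberIter_shift_add_le (hF : IsQpfLift ω F) {s t : ℝ} (hst : s ≤ t) {n : ℕ}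
    (hn : 1 ≤ n) (θ : T1) {x y : ℝ} (hxy : x ≤ y) :
    fiberIter ω (shift F s) n θ x + (t - s) ≤ fiberIter ω (shift F t) n θ y := by
  obtain ⟨n, rfl⟩ := Nat.exists_eq_add_of_le' hn
  rw [fiberIter_succ_right, fiberIter_succ_right]
  have := (hF.mono (θ + n • (ω : T1))).monotone (hF.fiberIter_shift_mono hst n θ hxy)
  simp only [shift] at this ⊢
  linarith

end IsQpfLift

end Constructions

theorem isOpenQuotientMap_prodMap_coe :
    IsOpenQuotientMap (Prod.map id (↑) : T1 × ℝ → T1 × T1) :=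
  .prodMap .id QuotientAddGroup.isOpenQuotientMap_mk

namespace IsQpfLift

variable {ω : ℝ} {F : T1 → ℝ → ℝ}

theorem periodic_displacement (hF : IsQpfLift ω F) (θ : T1) :
    Function.Periodic (fun x => F θ x - x) 1 := fun x => by
  simp only [hF.per, add_sub_add_right_eq_sub]

/-- The displacement `F_θ(x) - x`, as a function on the torus. -/
def displacement (hF : IsQpfLift ω F) : C(T1 × T1, ℝ) where
  toFun p := (hF.periodic_displacement p.1).lift p.2
  continuous_toFun :=
    isOpenQuotientMap_prodMap_coe.isQuotientMap.continuous_iff.2 (hF.cont.sub continuous_snd)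

theorem apply_eq_add_displacement (hF : IsQpfLift ω F) (θ : T1) (x : ℝ) :
    F θ x = x + hF.displacement (θ, x) :=
  (add_sub_cancel x (F θ x)).symm

theorem exists_abs_sub_le (hF : IsQpfLift ω F) :
    ∃ B, 0 ≤ B ∧ ∀ (n : ℕ) (θ : T1) (x : ℝ), |fiberIter ω F n θ x - x| ≤ n * B := by
  refine ⟨‖hF.displacement‖, norm_nonneg _, fun n => ?_⟩
  induction n with
  | zero => simp [fiberIter]
  | succ n ih =>
    intro θ x
    have hstep := hF.displacement.norm_coe_le_norm (θ, ↑x)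
    rw [Real.norm_eq_abs, ← sub_eq_of_eq_add' (hF.apply_eq_add_displacement θ x)] at hstep
    calc |fiberIter ω F (n + 1) θ x - x|
        ≤ |fiberIter ω F n (θ + ω) (F θ x) - F θ x| + |F θ x - x| := abs_sub_le _ _ _
      _ ≤ n * ‖hF.displacement‖ + ‖hF.displacement‖ := add_le_add (ih _ _) hstep
      _ = (n + 1 : ℕ) * ‖hF.displacement‖ := by push_cast; ring

theorem exists_dist_lt_fiberIter_shift_le (hF : IsQpfLift ω F) {s t : ℝ} (hst : s < t) :
    ∃ δ > 0, ∀ θ θ' : T1, dist θ θ' < δ → ∀ (n : ℕ) (x y : ℝ), x ≤ y →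
      fiberIter ω (shift F s) n θ x ≤ fiberIter ω (shift F t) n θ' y := by
  obtain ⟨δ, hδ, hdisp⟩ := Metric.uniformContinuous_iff.1
    (CompactSpace.uniformContinuous_of_continuous hF.displacement.continuous) _ (sub_pos.2 hst)
  refine ⟨δ, hδ, fun θ θ' hdist n x y hxy => ?_⟩
  have hle : ∀ ϑ x, shift F s ϑ x ≤ shift F t (ϑ + (θ' - θ)) x := by
    intro ϑ x
    have hclose : dist (ϑ, (x : T1)) (ϑ + (θ' - θ), (x : T1)) < δ := by
      simpa [Prod.dist_eq, dist_eq_norm, norm_sub_rev] using hdist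
    have := (abs_lt.1 (hdisp hclose)).2
    simp only [shift, hF.apply_eq_add_displacement]
    linarith
  have := fiberIter_le_fiberIter (ω := ω) (fun ϑ => ((hF.shift t).mono ϑ).monotone) hle n θ hxy
  rwa [add_sub_cancel] at this

end IsQpfLift

section Circle

variable {ω : ℝ}

theorem denseRange_add_nsmul_coe (hω : Irrational ω) (θ : T1) :
    DenseRange fun n : ℕ => θ + n • (ω : T1) :=
  (Homeomorph.addLeft θ).surjective.denseRange.comp
    (denseRange_zsmul_iff_nsmul.1 (AddCircle.denseRange_zsmul_coe_iff.2 (by rwa [div_one])))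
    (Homeomorph.addLeft θ).continuous

theorem exists_forall_exists_le_mem_of_isOpen {X : Type*} [TopologicalSpace X] [CompactSpace X]
    {U : ℕ → Set X} (hU : ∀ n, IsOpen (U n)) (hcover : ∀ x, ∃ n, x ∈ U n) :
    ∃ N, ∀ x, ∃ n ≤ N, x ∈ U n := by
  obtain ⟨t, ht⟩ := isCompact_univ.elim_finite_subcover U hU
    fun x _ => Set.mem_iUnion.2 (hcover x)
  refine ⟨t.sup id, fun x => ?_⟩
  obtain ⟨n, hnt, hn⟩ := Set.mem_iUnion₂.1 (ht (Set.mem_univ x))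
  exact ⟨n, Finset.le_sup (f := id) hnt, hn⟩

theorem exists_forall_exists_le_dist_add_nsmul_lt (hω : Irrational ω) (θ₀ : T1) {δ : ℝ}
    (hδ : 0 < δ) : ∃ L : ℕ, ∀ θ : T1, ∃ l ≤ L, dist (θ + l • (ω : T1)) θ₀ < δ := by
  refine exists_forall_exists_le_mem_of_isOpen
    (U := fun n => {θ : T1 | dist (θ + n • (ω : T1)) θ₀ < δ})
    (fun _ => isOpen_lt (by fun_prop) continuous_const) fun θ => ?_
  obtain ⟨n, hn⟩ := (denseRange_add_nsmul_coe hω θ).exists_mem_open Metric.isOpen_ball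
    ⟨θ₀, Metric.mem_ball_self hδ⟩
  exact ⟨n, hn⟩

end Circle

section CommonRotationNumber

variable {ω ρ : ℝ} {F G : T1 → ℝ → ℝ}

theorem exists_forall_exists_le_fiberIter_add_one_lt (hF : IsQpfLift ω F) (hG : IsQpfLift ω G)
    (hsep : ∀ θ x, ∃ n, fiberIter ω G n θ x + 1 < fiberIter ω F n θ x) :
    ∃ N, ∀ θ x, ∃ n ≤ N, fiberIter ω G n θ x + 1 < fiberIter ω F n θ x := by
  have hiff : ∀ n θ (x : ℝ), fiberIter ω G n θ x + 1 < fiberIter ω F n θ x ↔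
      (hG.iterate n).displacement (θ, x) + 1 < (hF.iterate n).displacement (θ, x) := by
    intro n θ x
    rw [(hG.iterate n).apply_eq_add_displacement, (hF.iterate n).apply_eq_add_displacement,
      add_assoc, add_lt_add_iff_left]
  simp only [hiff] at hsep ⊢
  obtain ⟨N, hN⟩ := exists_forall_exists_le_mem_of_isOpen
    (U := fun n => {p | (hG.iterate n).displacement p + 1 < (hF.iterate n).displacement p})
    (fun n => isOpen_lt (by fun_prop) (by fun_prop))
    (fun ⟨θ, y⟩ => by obtain ⟨x, rfl⟩ := QuotientAddGroup.mk_surjective y; exact hsep θ x)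
  exact ⟨N, fun θ x => hN (θ, x)⟩

theorem exists_fiberIter_add_natCast_le (hF : IsQpfLift ω F) {N : ℕ}
    (hsep : ∀ θ x, ∃ n ≤ N, fiberIter ω G n θ x + 1 < fiberIter ω F n θ x)
    (θ : T1) (x : ℝ) (k : ℕ) :
    ∃ n, k ≤ n ∧ n ≤ k * N ∧ fiberIter ω G n θ x + k ≤ fiberIter ω F n θ x := by
  induction k with
  | zero => exact ⟨0, le_rfl, by simp, by simp [fiberIter]⟩
  | succ k ih =>
    obtain ⟨n, hkn, hnk, hle⟩ := ih
    obtain ⟨m, hmN, hm⟩ := hsep (θ + n • (ω : T1)) (fiberIter ω G n θ x)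
    have hm0 : m ≠ 0 := by
      rintro rfl
      exact (lt_add_one _).not_gt hm
    refine ⟨n + m, by omega, by nlinarith, ?_⟩
    have hpush := (hF.iterate m).mono (θ + n • (ω : T1)) |>.monotone hle
    rw [← Int.cast_natCast, (hF.iterate m).map_add_int, Int.cast_natCast] at hpush
    rw [fiberIter_add, fiberIter_add]
    push_cast
    linarith

theorem exists_forall_fiberIter_le_add_one (hF : IsQpfLift ω F) (hG : IsQpfLift ω G)
    (hFρ : HasRotNum ω F ρ) (hGρ : HasRotNum ω G ρ) :
    ∃ θ x, ∀ n, fiberIter ω F n θ x ≤ fiberIter ω G n θ x + 1 := by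
  by_contra! hsep
  obtain ⟨N, hN⟩ := exists_forall_exists_le_fiberIter_add_one_lt hF hG hsep
  have hlim := (hFρ 0 0).sub (hGρ 0 0)
  rw [sub_self] at hlim
  have hpos : (0 : ℝ) < 1 / (N + 1) := by positivity
  obtain ⟨n₀, hn₀⟩ := eventually_atTop.1 (hlim.eventually (gt_mem_nhds hpos))
  obtain ⟨n, hkn, hnk, hle⟩ := exists_fiberIter_add_natCast_le hF hN 0 0 (n₀ + 1)
  have hsmall := hn₀ n (by omega)
  have hn : (0 : ℝ) < n := by exact_mod_cast (by omega : 0 < n)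
  rw [← sub_div, div_lt_div_iff₀ hn (by positivity)] at hsmall
  have hnk' : (n : ℝ) ≤ (n₀ + 1 : ℕ) * N := by exact_mod_cast hnk
  nlinarith [Nat.cast_pos (α := ℝ).2 n₀.succ_pos, (Nat.cast_nonneg N : (0 : ℝ) ≤ N)]

end CommonRotationNumber

theorem abs_sub_mul_le_of_quasiadditive {b : ℕ → ℝ} {C ρ : ℝ}
    (hb : ∀ m n, |b (m + n) - b m - b n| ≤ C)
    (hρ : Tendsto (fun n : ℕ => b n / n) atTop (𝓝 ρ)) (n : ℕ) : |b n - n * ρ| ≤ C := by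
  have hmul : ∀ k : ℕ, |b ((k + 1) * n) - (k + 1) * b n| ≤ k * C := by
    intro k
    induction k with
    | zero => simp
    | succ k ih =>
      rw [show b ((k + 1 + 1) * n) - ((k + 1 : ℕ) + 1) * b n =
        b ((k + 1) * n + n) - b ((k + 1) * n) - b n + (b ((k + 1) * n) - (k + 1) * b n) by
          push_cast; ring_nf]
      refine (abs_add_le _ _).trans ((add_le_add (hb _ _) ih).trans_eq ?_)
      push_cast
      ring
  rcases n.eq_zero_or_pos with rfl | hn
  · simpa using hb 0 0
  have hn' : (0 : ℝ) < n := Nat.cast_pos.2 hn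
  have hsub : Tendsto (fun k : ℕ => |b n - b ((k + 1) * n) / ((k + 1) * n : ℕ) * n|) atTop
      (𝓝 |b n - ρ * n|) :=
    (((hρ.comp ((tendsto_add_atTop_nat 1).atTop_mul_const' hn)).mul_const _).const_sub _).abs
  rw [mul_comm (n : ℝ)]
  refine le_of_tendsto' hsub fun k => ?_
  have hk : (0 : ℝ) < k + 1 := by positivity
  rw [show b n - b ((k + 1) * n) / ((k + 1) * n : ℕ) * n =
    -((b ((k + 1) * n) - (k + 1) * b n) / (k + 1)) by push_cast; field_simp [hn']; ring,
    abs_neg, abs_div, abs_of_pos hk, div_le_iff₀ hk]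
  nlinarith [hmul k, (abs_nonneg _).trans (hb 0 0)]

/-- Bounded deviations: up to the error `C`, the orbits of `F_ε` do not run ahead of `x + nρ`,
and those of `F_{-ε}` do not lag behind it. -/
structure HasBoundedDeviation (ω : ℝ) (F : T1 → ℝ → ℝ) (ρ ε C : ℝ) : Prop where
  upper : ∀ n θ x, fiberIter ω (shift F ε) n θ x ≤ x + n * ρ + C
  lower : ∀ n θ x, x + n * ρ - C ≤ fiberIter ω (shift F (-ε)) n θ x

section Shadowing

variable {ω ρ δ x₀ : ℝ} {θ₀ : T1} {G H : T1 → ℝ → ℝ}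

theorem abs_fiberIter_add_sub_le_two (hG : IsQpfLift ω G) (hH : IsQpfLift ω H)
    (hGH : ∀ θ θ' : T1, dist θ θ' < δ → ∀ n x y, x ≤ y →
      fiberIter ω G n θ x ≤ fiberIter ω H n θ' y)
    (hclose : ∀ n, fiberIter ω H n θ₀ x₀ ≤ fiberIter ω G n θ₀ x₀ + 1)
    {r : ℕ} (hr : dist (θ₀ + r • (ω : T1)) θ₀ < δ) (n : ℕ) :
    |fiberIter ω G (r + n) θ₀ x₀ - fiberIter ω G n θ₀ x₀ - (fiberIter ω G r θ₀ x₀ - x₀)| ≤ 2 := by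
  have hGH₀ : fiberIter ω G r θ₀ x₀ ≤ fiberIter ω H r θ₀ x₀ :=
    hGH θ₀ θ₀ (by rw [dist_self]; exact dist_nonneg.trans_lt hr) r x₀ x₀ le_rfl
  set j := ⌈fiberIter ω G r θ₀ x₀ - x₀⌉
  have hj := Int.le_ceil (fiberIter ω G r θ₀ x₀ - x₀)
  have hj' := Int.ceil_lt_add_one (fiberIter ω G r θ₀ x₀ - x₀)
  have hupper : fiberIter ω G (r + n) θ₀ x₀ ≤ fiberIter ω H n θ₀ x₀ + j := by
    rw [fiberIter_add, ← (hH.iterate n).map_add_int]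
    exact hGH _ _ hr n _ _ (by linarith)
  have hlower : fiberIter ω G n θ₀ x₀ + (j - 1 : ℤ) ≤ fiberIter ω H (r + n) θ₀ x₀ := by
    rw [fiberIter_add, ← (hG.iterate n).map_add_int]
    refine hGH _ _ (by rwa [dist_comm]) n _ _ ?_
    push_cast
    linarith
  push_cast at hlower
  rw [abs_le]
  constructor <;> linarith [hclose n, hclose (r + n)]

theorem exists_forall_abs_fiberIter_add_sub_le (hω : Irrational ω) (hδ : 0 < δ)
    (hG : IsQpfLift ω G) (hH : IsQpfLift ω H)
    (hGH : ∀ θ θ' : T1, dist θ θ' < δ → ∀ n x y, x ≤ y →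
      fiberIter ω G n θ x ≤ fiberIter ω H n θ' y)
    (hclose : ∀ n, fiberIter ω H n θ₀ x₀ ≤ fiberIter ω G n θ₀ x₀ + 1) :
    ∃ C, ∀ m n, |fiberIter ω G (m + n) θ₀ x₀ - x₀ - (fiberIter ω G m θ₀ x₀ - x₀) -
      (fiberIter ω G n θ₀ x₀ - x₀)| ≤ C := by
  obtain ⟨L, hL⟩ := exists_forall_exists_le_dist_add_nsmul_lt hω θ₀ hδ
  obtain ⟨B, hB0, hB⟩ := hG.exists_abs_sub_le
  refine ⟨2 + 2 * (L * B), fun m n => ?_⟩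
  obtain ⟨l, hlL, hl⟩ := hL (θ₀ + m • (ω : T1))
  rw [add_assoc, ← add_nsmul] at hl
  have hreturn := abs_fiberIter_add_sub_le_two hG hH hGH hclose hl n
  have hstep : ∀ k, |fiberIter ω G (k + l) θ₀ x₀ - fiberIter ω G k θ₀ x₀| ≤ L * B := fun k => by
    rw [fiberIter_add]
    exact (hB l _ _).trans (by gcongr)
  have h₁ := hstep m
  have h₂ := hstep (m + n)
  rw [add_right_comm] at h₂
  rw [abs_le] at hreturn h₁ h₂ ⊢
  constructor <;> linarith

theorem fiberIter_sandwich_of_orbit (hG : IsQpfLift ω G) (hH : IsQpfLift ω H)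
    (hGH : ∀ n, fiberIter ω G n θ₀ x₀ ≤ fiberIter ω H n θ₀ x₀)
    (hclose : ∀ n, fiberIter ω H n θ₀ x₀ ≤ fiberIter ω G n θ₀ x₀ + 1) (m n : ℕ) (x : ℝ) :
    fiberIter ω H n (θ₀ + m • (ω : T1)) x ≤
        x + (fiberIter ω G (m + n) θ₀ x₀ - fiberIter ω G m θ₀ x₀) + 2 ∧
      x + (fiberIter ω G (m + n) θ₀ x₀ - fiberIter ω G m θ₀ x₀) - 2 ≤
        fiberIter ω G n (θ₀ + m • (ω : T1)) x := by
  set j := ⌈x - fiberIter ω G m θ₀ x₀⌉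
  have hj := Int.le_ceil (x - fiberIter ω G m θ₀ x₀)
  have hj' := Int.ceil_lt_add_one (x - fiberIter ω G m θ₀ x₀)
  have hupper : fiberIter ω H n (θ₀ + m • (ω : T1)) x ≤ fiberIter ω H (m + n) θ₀ x₀ + j := by
    rw [fiberIter_add, ← (hH.iterate n).map_add_int]
    exact ((hH.iterate n).mono _).monotone (by linarith [hGH m])
  have hlower : fiberIter ω G (m + n) θ₀ x₀ + (j - 1 : ℤ) ≤
      fiberIter ω G n (θ₀ + m • (ω : T1)) x := by
    rw [fiberIter_add, ← (hG.iterate n).map_add_int]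
    refine ((hG.iterate n).mono _).monotone ?_
    push_cast
    linarith
  push_cast at hlower
  exact ⟨by linarith [hclose (m + n)], by linarith⟩

end Shadowing

theorem IsQpfLift.exists_hasBoundedDeviation {ω ε ρ : ℝ} {F : T1 → ℝ → ℝ} (hF : IsQpfLift ω F)
    (hω : Irrational ω) (hε : 0 < ε) (hupper : HasRotNum ω (shift F ε) ρ)
    (hlower : HasRotNum ω (shift F (-ε)) ρ) : ∃ C, HasBoundedDeviation ω F ρ ε C := by
  have hG := hF.shift (-ε)
  have hH := hF.shift ε
  obtain ⟨θ₀, x₀, hclose⟩ := exists_forall_fiberIter_le_add_one hH hG hupper hlower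
  obtain ⟨δ, hδ, hGH⟩ := hF.exists_dist_lt_fiberIter_shift_le (neg_lt_self hε)
  obtain ⟨C, hC⟩ := exists_forall_abs_fiberIter_add_sub_le hω hδ hG hH hGH hclose
  have hdev : ∀ m n, |fiberIter ω (shift F (-ε)) (m + n) θ₀ x₀ -
      fiberIter ω (shift F (-ε)) m θ₀ x₀ - n * ρ| ≤ 2 * C := by
    intro m n
    have hquasi := abs_le.1 (hC m n)
    have hrot := abs_le.1 (abs_sub_mul_le_of_quasiadditive hC (hlower θ₀ x₀) n)
    exact abs_le.2 ⟨by linarith, by linarith⟩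
  have hsandwich := fiberIter_sandwich_of_orbit hG hH
    (fun n => hGH _ _ (by rwa [dist_self]) n _ _ le_rfl) hclose
  have hdense := denseRange_add_nsmul_coe hω θ₀
  have hcont {K : T1 → ℝ → ℝ} (hK : IsQpfLift ω K) (n : ℕ) (x : ℝ) :
      Continuous fun θ => fiberIter ω K n θ x :=
    (hK.iterate n).cont.comp (.prodMk_left x)
  refine ⟨2 * C + 2, fun n θ x => ?_, fun n θ x => ?_⟩
  · refine isClosed_property hdense (isClosed_le (hcont hH n x) continuous_const) (fun m => ?_) θ
    linarith [(hsandwich m n x).1, (abs_le.1 (hdev m n)).2]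
  · refine isClosed_property hdense (isClosed_le continuous_const (hcont hG n x)) (fun m => ?_) θ
    linarith [(hsandwich m n x).2, (abs_le.1 (hdev m n)).1]

/-- The lower envelope at height `c` of the images of horizontal lines under `G`, moving with
mean velocity `ρ`. When `G` lags behind that velocity by a bounded amount only, the images of these
graphs under `G` stay above them. -/
def lowerGraph (ω : ℝ) (G : T1 → ℝ → ℝ) (ρ c : ℝ) (θ : T1) : ℝ :=
  ⨅ n : ℕ, fiberIter ω G n (θ - n • (ω : T1)) (c - n * ρ)

section LowerGraph

variable {ω ρ C : ℝ} {G : T1 → ℝ → ℝ}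

theorem sub_le_fiberIter_sub (hlow : ∀ n θ x, x + n * ρ - C ≤ fiberIter ω G n θ x) (c : ℝ)
    (θ : T1) (n : ℕ) : c - C ≤ fiberIter ω G n (θ - n • (ω : T1)) (c - n * ρ) := by
  simpa using hlow n (θ - n • (ω : T1)) (c - n * ρ)

theorem bddBelow_range_fiberIter_sub (hlow : ∀ n θ x, x + n * ρ - C ≤ fiberIter ω G n θ x)
    (c : ℝ) (θ : T1) :
    BddBelow (Set.range fun n : ℕ => fiberIter ω G n (θ - n • (ω : T1)) (c - n * ρ)) :=
  ⟨c - C, Set.forall_mem_range.2 (sub_le_fiberIter_sub hlow c θ)⟩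

theorem sub_le_lowerGraph (hlow : ∀ n θ x, x + n * ρ - C ≤ fiberIter ω G n θ x) (c : ℝ)
    (θ : T1) : c - C ≤ lowerGraph ω G ρ c θ :=
  le_ciInf (sub_le_fiberIter_sub hlow c θ)

theorem lowerGraph_le (hlow : ∀ n θ x, x + n * ρ - C ≤ fiberIter ω G n θ x) (c : ℝ)
    (θ : T1) : lowerGraph ω G ρ c θ ≤ c := by
  simpa [fiberIter, lowerGraph] using ciInf_le (bddBelow_range_fiberIter_sub hlow c θ) 0

theorem lowerGraph_mono (hG : IsQpfLift ω G)
    (hlow : ∀ n θ x, x + n * ρ - C ≤ fiberIter ω G n θ x) (θ : T1) :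
    Monotone fun c => lowerGraph ω G ρ c θ := fun c _ hc =>
  ciInf_mono (bddBelow_range_fiberIter_sub hlow c θ) fun n =>
    ((hG.iterate n).mono _).monotone (sub_le_sub_right hc _)

theorem lowerGraph_add_of_equivariant (hlow : ∀ n θ x, x + n * ρ - C ≤ fiberIter ω G n θ x)
    {a : T1} {b : ℝ} (hab : ∀ θ x, G (θ + a) (x + b) = G θ x + b) (c : ℝ) (θ : T1) :
    lowerGraph ω G ρ (c + b) (θ + a) = lowerGraph ω G ρ c θ + b := by
  rw [lowerGraph, lowerGraph, ciInf_add (bddBelow_range_fiberIter_sub hlow c θ)]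
  refine iInf_congr fun n => ?_
  rw [← fiberIter_add_of_equivariant hab, add_sub_right_comm, add_sub_right_comm]

theorem lowerGraph_add_int (hG : IsQpfLift ω G)
    (hlow : ∀ n θ x, x + n * ρ - C ≤ fiberIter ω G n θ x) (c : ℝ) (j : ℤ) (θ : T1) :
    lowerGraph ω G ρ (c + j) θ = lowerGraph ω G ρ c θ + j := by
  have := lowerGraph_add_of_equivariant hlow (a := 0) (b := j)
    (fun θ x => by rw [add_zero, hG.map_add_int]) c θ
  rwa [add_zero] at this

theorem upperSemicontinuous_lowerGraph (hG : IsQpfLift ω G)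
    (hlow : ∀ n θ x, x + n * ρ - C ≤ fiberIter ω G n θ x) (c : ℝ) :
    UpperSemicontinuous (lowerGraph ω G ρ c) :=
  upperSemicontinuous_ciInf (bddBelow_range_fiberIter_sub hlow c) fun n =>
    ((hG.iterate n).cont.comp ((continuous_sub_right _).prodMk continuous_const)
      ).upperSemicontinuous

theorem lowerGraph_add_le_apply (hG : IsQpfLift ω G)
    (hlow : ∀ n θ x, x + n * ρ - C ≤ fiberIter ω G n θ x) (c : ℝ) (θ : T1) :
    lowerGraph ω G ρ (c + ρ) (θ + ω) ≤ G θ (lowerGraph ω G ρ c θ) := by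
  have hcont : Continuous (G θ) := hG.cont.comp (.prodMk_right θ)
  rw [lowerGraph, lowerGraph, (hG.mono θ).monotone.map_ciInf_of_continuousAt
    hcont.continuousAt (bddBelow_range_fiberIter_sub hlow c θ)]
  refine le_ciInf fun n => ?_
  refine (ciInf_le (bddBelow_range_fiberIter_sub hlow (c + ρ) (θ + ω)) (n + 1)).trans_eq ?_
  rw [fiberIter_succ_right, succ_nsmul, add_sub_add_right_eq_sub, sub_add_cancel]
  congr 2
  push_cast
  ring

theorem lowerGraph_add_nsmul_le_fiberIter (hG : IsQpfLift ω G)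
    (hlow : ∀ n θ x, x + n * ρ - C ≤ fiberIter ω G n θ x) (n : ℕ) (c : ℝ) (θ : T1) :
    lowerGraph ω G ρ (c + n * ρ) (θ + n • (ω : T1)) ≤
      fiberIter ω G n θ (lowerGraph ω G ρ c θ) := by
  induction n with
  | zero => simp [fiberIter]
  | succ n ih =>
    rw [fiberIter_succ_right]
    refine le_trans (le_of_eq ?_) ((lowerGraph_add_le_apply hG hlow (c + n * ρ) _).trans
      ((hG.mono _).monotone ih))
    congr 1
    · push_cast; ring
    · rw [succ_nsmul, add_assoc]

end LowerGraph

section TrappedOrbit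

variable {ω ρ κ δ δ₀ : ℝ} {G H : T1 → ℝ → ℝ} {g : ℝ → T1 → ℝ}

theorem exists_overtaking_chain
    (hGH : ∀ θ θ' : T1, dist θ θ' < δ₀ → ∀ n x y, x ≤ y →
      fiberIter ω G n θ x ≤ fiberIter ω H n θ' y) (hδ : 0 < δ)
    (hesc : ∀ θ c, ∃ (n : ℕ) (θ' : T1), dist θ' (θ + n • (ω : T1)) < δ ∧
      g (c + κ + n * ρ) θ' < fiberIter ω G n θ (g c θ))
    (θ : T1) (c : ℝ) (k : ℕ) (hk : k * δ ≤ δ₀) :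
    ∃ (n : ℕ) (θ' : T1), dist θ' (θ + n • (ω : T1)) ≤ k * δ ∧
      g (c + k * κ + n * ρ) θ' ≤ fiberIter ω H n θ (g c θ) := by
  induction k with
  | zero => exact ⟨0, θ, by simp, by simp [fiberIter]⟩
  | succ k ih =>
    push_cast at hk ⊢
    obtain ⟨n, θ', hdist, hle⟩ := ih (by linarith)
    obtain ⟨m, θ'', hdist', hlt⟩ := hesc θ' (c + k * κ + n * ρ)
    refine ⟨n + m, θ'', ?_, ?_⟩
    · have htri := dist_triangle θ'' (θ' + m • (ω : T1)) (θ + (n + m) • (ω : T1))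
      rw [add_nsmul, ← add_assoc, dist_add_right, add_assoc, ← add_nsmul] at htri
      linarith
    · rw [fiberIter_add]
      refine le_trans (le_of_eq ?_) (hlt.le.trans (hGH _ _ (by linarith) m _ _ hle))
      congr 1
      push_cast
      ring

/-- If every orbit started on a graph escaped, the errors `κ` of an escape chain would add up to
more than the bounded deviation permits. -/
theorem HasBoundedDeviation.exists_trapped_orbit {ε C s : ℝ} {F : T1 → ℝ → ℝ}
    (hdev : HasBoundedDeviation ω F ρ ε C) (hF : IsQpfLift ω F) (hs : s < ε) (hκ : 0 < κ) :
    ∃ δ > 0, ∃ (θ₀ : T1) (c : ℝ), ∀ (n : ℕ) (θ : T1), dist θ (θ₀ + n • (ω : T1)) < δ →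
      fiberIter ω (shift F s) n θ₀ (lowerGraph ω (shift F (-ε)) ρ c θ₀) ≤
        lowerGraph ω (shift F (-ε)) ρ (c + κ + n * ρ) θ := by
  obtain ⟨δ₀, hδ₀, hcomp⟩ := hF.exists_dist_lt_fiberIter_shift_le hs
  obtain ⟨K, hK⟩ := exists_nat_gt (2 * C / κ)
  rw [div_lt_iff₀ hκ] at hK
  refine ⟨δ₀ / (K + 1), by positivity, ?_⟩
  by_contra! hesc
  have hKδ : K * (δ₀ / (K + 1)) ≤ δ₀ := by
    rw [mul_div_assoc', div_le_iff₀ (by positivity)]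
    linarith
  obtain ⟨n, θ, -, hle⟩ := exists_overtaking_chain hcomp (by positivity) hesc 0 0 K hKδ
  linarith [hdev.upper n 0 (lowerGraph ω (shift F (-ε)) ρ 0 0),
    lowerGraph_le hdev.lower 0 0, sub_le_lowerGraph hdev.lower (0 + K * κ + n * ρ) θ]

end TrappedOrbit

section Kronecker

variable {ω ρ : ℝ}

theorem norm_coe_le_abs_sub_int (x : ℝ) (k : ℤ) : ‖(x : T1)‖ ≤ |x - k| := by
  rw [UnitAddCircle.norm_eq]
  exact round_le x k

theorem exists_int_eq_add_of_coe_eq_coe {x y : ℝ} (h : (x : T1) = y) : ∃ j : ℤ, x = y + j := by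
  rw [← sub_eq_zero, ← AddCircle.coe_sub, AddCircle.coe_eq_zero_iff] at h
  obtain ⟨j, hj⟩ := h
  exact ⟨j, by rw [← sub_eq_iff_eq_add', ← hj, zsmul_one]⟩

theorem exists_pos_abs_mul_sub_lt (ω ρ : ℝ) {τ : ℝ} (hτ : 0 < τ) :
    ∃ m i j : ℤ, 0 < m ∧ |m * ω - i| < τ ∧ |m * ρ - j| < τ := by
  have hrec := mapClusterPt_iff_frequently.1
    (mapClusterPt_zero_atTop_nsmul ((ω : T1), (ρ : T1))) _ (Metric.ball_mem_nhds 0 hτ)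
  obtain ⟨m, hm, hm₀⟩ := (hrec.and_eventually (eventually_gt_atTop 0)).exists
  rw [mem_ball_zero_iff, Prod.norm_def, max_lt_iff] at hm
  simp only [Prod.smul_fst, Prod.smul_snd, ← coe_natCast_mul, UnitAddCircle.norm_eq] at hm
  exact ⟨m, _, _, by exact_mod_cast hm₀, by simpa using hm.1, by simpa using hm.2⟩

theorem exists_pair_abs_mul_sub_lt_det_ne_zero
    (hrel : ∀ a b c : ℤ, a * ω + b * ρ = c → a = 0 ∧ b = 0) {τ : ℝ} (hτ : 0 < τ) :
    ∃ m i j m' i' j' : ℤ, |m * ω - i| < τ ∧ |m * ρ - j| < τ ∧ |m' * ω - i'| < τ ∧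
      |m' * ρ - j'| < τ ∧ (m * ω - i) * (m' * ρ - j') - (m' * ω - i') * (m * ρ - j) ≠ 0 := by
  obtain ⟨m, i, j, hm, hi, hj⟩ := exists_pos_abs_mul_sub_lt ω ρ hτ
  have hm₁ : (1 : ℝ) ≤ m := by exact_mod_cast hm
  have hi₀ : 0 < |m * ω - i| := by
    refine abs_pos.2 fun h => hm.ne' (hrel m 0 i ?_).1
    push_cast
    linarith
  obtain ⟨m', i', j', hm', hi', hj'⟩ :=
    exists_pos_abs_mul_sub_lt ω ρ (lt_min hτ (div_pos hi₀ (one_pos.trans_le hm₁)))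
  have hm₁' : (1 : ℝ) ≤ m' := by exact_mod_cast hm'
  refine ⟨m, i, j, m', i', j', hi, hj, hi'.trans_le (min_le_left _ _),
    hj'.trans_le (min_le_left _ _), fun hdet => ?_⟩
  have hcollinear : m * i' - m' * i = 0 := by
    refine (hrel (m' * j - m * j') (m * i' - m' * i) (i' * j - i * j') ?_).2
    push_cast
    linarith
  have hratio : m' * (m * ω - i) = m * (m' * ω - i') := by
    have : (m * i' - m' * i : ℝ) = 0 := by exact_mod_cast hcollinear
    linarith
  have hratio := congrArg abs hratio
  rw [abs_mul, abs_mul, abs_of_pos (one_pos.trans_le hm₁),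
    abs_of_pos (one_pos.trans_le hm₁')] at hratio
  have hsmall := hi'.trans_le (min_le_right _ _)
  rw [lt_div_iff₀ (one_pos.trans_le hm₁)] at hsmall
  nlinarith

theorem exists_int_abs_sub_lt_of_det_ne_zero {a b a' b' τ : ℝ} (ha : |a| < τ) (hb : |b| < τ)
    (ha' : |a'| < τ) (hb' : |b'| < τ) (hdet : a * b' - a' * b ≠ 0) (x y : ℝ) :
    ∃ k k' : ℤ, |x - (k * a + k' * a')| < τ ∧ |y - (k * b + k' * b')| < τ := by
  set r := (x * b' - y * a') / (a * b' - a' * b) with hr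
  set r' := (y * a - x * b) / (a * b' - a' * b) with hr'
  have hx : x = r * a + r' * a' := by
    rw [hr, hr', div_mul_eq_mul_div, div_mul_eq_mul_div, ← add_div, eq_div_iff hdet]
    ring
  have hy : y = r * b + r' * b' := by
    rw [hr, hr', div_mul_eq_mul_div, div_mul_eq_mul_div, ← add_div, eq_div_iff hdet]
    ring
  have hround : ∀ u u' : ℝ, |u| < τ → |u'| < τ →
      |r * u + r' * u' - (round r * u + round r' * u')| < τ := by
    intro u u' hu hu'
    calc |r * u + r' * u' - (round r * u + round r' * u')|
        = |(r - round r) * u + (r' - round r') * u'| := by congr 1; ring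
      _ ≤ |r - round r| * |u| + |r' - round r'| * |u'| := by
          simpa only [abs_mul] using abs_add_le ((r - round r) * u) ((r' - round r') * u')
      _ ≤ 1 / 2 * |u| + 1 / 2 * |u'| := by gcongr <;> exact abs_sub_round _
      _ < τ := by linarith
  refine ⟨round r, round r', ?_, ?_⟩
  · rw [hx]
    exact hround a a' ha ha'
  · rw [hy]
    apply hround <;> assumption

/-- Two short, linearly independent return vectors span an arbitrarily fine lattice. -/
theorem denseRange_nsmul_prod_coe (hrel : ∀ a b c : ℤ, a * ω + b * ρ = c → a = 0 ∧ b = 0) :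
    DenseRange fun n : ℕ => n • ((ω : T1), (ρ : T1)) := by
  refine denseRange_zsmul_iff_nsmul.1 (Metric.denseRange_iff.2 ?_)
  rintro ⟨x, y⟩ τ hτ
  obtain ⟨x, rfl⟩ := QuotientAddGroup.mk_surjective x
  obtain ⟨y, rfl⟩ := QuotientAddGroup.mk_surjective y
  obtain ⟨m, i, j, m', i', j', hi, hj, hi', hj', hdet⟩ :=
    exists_pair_abs_mul_sub_lt_det_ne_zero hrel hτ
  obtain ⟨k, k', hx, hy⟩ := exists_int_abs_sub_lt_of_det_ne_zero hi hj hi' hj' hdet x y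
  have hdist : ∀ (z α : ℝ) (p p' : ℤ), |z - (k * (m * α - p) + k' * (m' * α - p'))| < τ →
      dist (z : T1) ((k * m + k' * m') • (α : T1)) < τ := by
    intro z α p p' h
    rw [dist_eq_norm, ← AddCircle.coe_zsmul, ← AddCircle.coe_sub, zsmul_eq_mul]
    refine (norm_coe_le_abs_sub_int _ (-(k * p + k' * p'))).trans_lt (lt_of_eq_of_lt ?_ h)
    congr 1
    push_cast
    ring
  exact ⟨k * m + k' * m', max_lt (hdist x ω i i' hx) (hdist y ρ j j' hy)⟩

end Kronecker

section RationalRelation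

variable {ω ρ ε κ C : ℝ} {F : T1 → ℝ → ℝ}

theorem HasBoundedDeviation.exists_lowerGraph_add_le (hdev : HasBoundedDeviation ω F ρ ε C)
    (hF : IsQpfLift ω F) (hε : 0 < ε) (hκ : 0 < κ) :
    ∃ δ > 0, ∃ (θ₀ : T1) (c : ℝ), ∀ n : ℕ, 1 ≤ n → ∀ (j : ℤ) (θ : T1),
      dist θ (θ₀ + n • (ω : T1)) < δ →
      lowerGraph ω (shift F (-ε)) ρ (c + n * ρ + j) (θ₀ + n • (ω : T1)) + ε ≤
        lowerGraph ω (shift F (-ε)) ρ (c + n * ρ + j + κ) θ := by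
  obtain ⟨δ, hδ, θ₀, c, htrap⟩ := hdev.exists_trapped_orbit hF hε hκ
  refine ⟨δ, hδ, θ₀, c, fun n hn j θ hθ => ?_⟩
  have hG := hF.shift (-ε)
  have hbelow := lowerGraph_add_nsmul_le_fiberIter hG hdev.lower n c θ₀
  have hgap := hF.fiberIter_shift_add_le (s := -ε) (t := 0) (by linarith) hn θ₀
    (le_refl (lowerGraph ω (shift F (-ε)) ρ c θ₀))
  rw [add_right_comm _ (j : ℝ), lowerGraph_add_int hG hdev.lower,
    lowerGraph_add_int hG hdev.lower, add_right_comm _ (n * ρ)]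
  linarith [htrap n θ hθ]

theorem exists_lift_mem_Ioo_of_denseRange
    (hdense : DenseRange fun n : ℕ => n • ((ω : T1), (ρ : T1))) (θ₀ : T1) {δ : ℝ} (hδ : 0 < δ)
    {a b : ℝ} (hab : a < b) : ∃ (n : ℕ) (j : ℤ), 1 ≤ n ∧ dist (θ₀ + n • (ω : T1)) θ₀ < δ ∧
      n * ρ + j ∈ Set.Ioo a b := by
  have hdense' : DenseRange fun n : ℕ => ((ω : T1), (ρ : T1)) + n • ((ω : T1), (ρ : T1)) :=
    (Homeomorph.addLeft _).surjective.denseRange.comp hdense (Homeomorph.addLeft _).continuous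
  obtain ⟨n, hfst, y, hy, hsnd⟩ := hdense'.exists_mem_open
    (Metric.isOpen_ball.prod (QuotientAddGroup.isOpenMap_coe _ isOpen_Ioo))
    ((Metric.nonempty_ball.2 hδ : (Metric.ball (0 : T1) δ).Nonempty).prod
      ((Set.nonempty_Ioo.2 hab).image _))
  rw [← succ_nsmul'] at hfst hsnd
  rw [Prod.smul_snd, ← coe_natCast_mul] at hsnd
  obtain ⟨j, rfl⟩ := exists_int_eq_add_of_coe_eq_coe hsnd
  exact ⟨n + 1, j, by omega, by simpa using hfst, hy⟩

theorem HasBoundedDeviation.exists_lowerGraph_climb (hdev : HasBoundedDeviation ω F ρ ε C)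
    (hF : IsQpfLift ω F) (hε : 0 < ε) (hdense : DenseRange fun n : ℕ => n • ((ω : T1), (ρ : T1))) :
    ∃ (c : ℝ) (θ : ℕ → T1) (height : ℕ → ℝ),
      (∀ l : ℕ, height l ∈ Set.Ioo (c + l * (ε / 2)) (c + l * (ε / 2) + ε / 4)) ∧
      ∀ l, lowerGraph ω (shift F (-ε)) ρ (height l) (θ l) + ε ≤
        lowerGraph ω (shift F (-ε)) ρ (height (l + 1)) (θ (l + 1)) := by
  obtain ⟨δ, hδ, θ₀, c, hjump⟩ := hdev.exists_lowerGraph_add_le hF hε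
    (show 0 < ε / 4 by linarith)
  choose n j hn hclose hlevel using fun l : ℕ => exists_lift_mem_Ioo_of_denseRange hdense θ₀
    (half_pos hδ) (show l * (ε / 2) < l * (ε / 2) + ε / 4 by linarith)
  refine ⟨c, fun l => θ₀ + n l • (ω : T1), fun l => c + n l * ρ + j l,
    fun l => ⟨by linarith [(hlevel l).1], by linarith [(hlevel l).2]⟩, fun l => ?_⟩
  have hdist : dist (θ₀ + n (l + 1) • (ω : T1)) (θ₀ + n l • (ω : T1)) < δ := by
    linarith [dist_triangle_right (θ₀ + n (l + 1) • (ω : T1)) (θ₀ + n l • (ω : T1)) θ₀,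
      hclose l, hclose (l + 1)]
  have hheight : c + n l * ρ + j l + ε / 4 ≤ c + n (l + 1) * ρ + j (l + 1) := by
    have hnext := (hlevel (l + 1)).1
    push_cast at hnext
    linarith [(hlevel l).2]
  exact (hjump (n l) (hn l) (j l) _ hdist).trans
    (lowerGraph_mono (hF.shift (-ε)) hdev.lower _ hheight)

theorem HasBoundedDeviation.exists_int_relation (hdev : HasBoundedDeviation ω F ρ ε C)
    (hF : IsQpfLift ω F) (hε : 0 < ε) :
    ∃ a b c : ℤ, a * ω + b * ρ = c ∧ (a ≠ 0 ∨ b ≠ 0) := by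
  by_contra! hrel
  obtain ⟨c, θ, height, hheight, hstep⟩ :=
    hdev.exists_lowerGraph_climb hF hε (denseRange_nsmul_prod_coe hrel)
  set g := lowerGraph ω (shift F (-ε)) ρ
  have hclimb : ∀ l : ℕ, g (height 0) (θ 0) + l * ε ≤ g (height l) (θ l) := by
    intro l
    induction l with
    | zero => simp
    | succ l ih =>
      push_cast
      linarith [hstep l]
  obtain ⟨l, hl⟩ := exists_nat_gt (2 * (ε / 4 + C) / ε)
  rw [div_lt_iff₀ hε] at hl
  have hlow := sub_le_lowerGraph hdev.lower (height 0) (θ 0)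
  have hhigh := lowerGraph_le hdev.lower (height l) (θ l)
  have hheight₀ := (hheight 0).1
  rw [Nat.cast_zero, zero_mul] at hheight₀
  linarith [hclimb l, (hheight l).2]

theorem HasBoundedDeviation.exists_rat_relation (hdev : HasBoundedDeviation ω F ρ ε C)
    (hF : IsQpfLift ω F) (hω : Irrational ω) (hε : 0 < ε) :
    ∃ (σ : ℚ) (q : ℕ) (k : ℤ), 1 ≤ q ∧ q * (ρ - σ * ω) = k := by
  obtain ⟨a, b, c, hrel, hab⟩ := hdev.exists_int_relation hF hε
  have hb : b ≠ 0 := by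
    rintro rfl
    refine (hω.intCast_mul (hab.resolve_right (not_not.2 rfl))).ne_int c ?_
    simpa using hrel
  have hb' : (b : ℝ) ≠ 0 := Int.cast_ne_zero.2 hb
  refine ⟨-a / b, b.natAbs, b.sign * c, Int.natAbs_pos.2 hb, ?_⟩
  rw [Nat.cast_natAbs, ← Int.sign_mul_self_eq_abs]
  push_cast
  rw [← hrel]
  field_simp
  ring

end RationalRelation

section RotationZero

variable {ω ρ ε C : ℝ} {F : T1 → ℝ → ℝ}

theorem shift_shift (F : T1 → ℝ → ℝ) (s t : ℝ) : shift (shift F s) t = shift F (s + t) := by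
  ext θ x
  exact add_assoc _ _ _

theorem shift_zero (F : T1 → ℝ → ℝ) : shift F 0 = F := by
  ext θ x
  exact add_zero _

theorem IsQpfLift.fiberIter_shift_int (hF : IsQpfLift ω F) (j : ℤ) (n : ℕ) (θ : T1) (x : ℝ) :
    fiberIter ω (shift F j) n θ x = fiberIter ω F n θ x + (n * j : ℤ) := by
  induction n with
  | zero => simp [fiberIter]
  | succ n ih =>
    rw [fiberIter_succ_right, fiberIter_succ_right, ih, shift, hF.map_add_int]
    push_cast
    ring

theorem HasBoundedDeviation.shift_int (hdev : HasBoundedDeviation ω F ρ ε C)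
    (hF : IsQpfLift ω F) (j : ℤ) : HasBoundedDeviation ω (shift F j) (ρ + j) ε C where
  upper n θ x := by
    rw [shift_shift, add_comm (j : ℝ), ← shift_shift, (hF.shift ε).fiberIter_shift_int]
    push_cast
    linarith [hdev.upper n θ x]
  lower n θ x := by
    rw [shift_shift, add_comm (j : ℝ), ← shift_shift, (hF.shift (-ε)).fiberIter_shift_int]
    push_cast
    linarith [hdev.lower n θ x]

theorem HasBoundedDeviation.iterate (hdev : HasBoundedDeviation ω F ρ ε C)
    (hF : IsQpfLift ω F) (hε : 0 ≤ ε) {q : ℕ} (hq : 1 ≤ q) :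
    HasBoundedDeviation (q * ω) (fiberIter ω F q) (q * ρ) ε C where
  upper n θ x := by
    have hle := fiberIter_le_fiberIter (ω := q * ω) (F := shift (fiberIter ω F q) ε)
      (G := fiberIter ω (shift F ε) q) (a := 0)
      (fun θ => (((hF.shift ε).iterate q).mono θ).monotone)
      (fun θ x => by
        have := hF.fiberIter_shift_add_le hε hq θ (le_refl x)
        rw [shift_zero, sub_zero] at this
        rwa [add_zero]) n θ
      (le_refl x)
    rw [← fiberIter_mul, add_zero] at hle
    have hup := hdev.upper (q * n) θ x
    push_cast at hup
    linarith
  lower n θ x := by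
    have hle := fiberIter_le_fiberIter (ω := q * ω) (F := fiberIter ω (shift F (-ε)) q)
      (G := shift (fiberIter ω F q) (-ε)) (a := 0)
      (fun θ => (((hF.iterate q).shift (-ε)).mono θ).monotone)
      (fun θ x => by
        have := hF.fiberIter_shift_add_le (neg_nonpos.2 hε) hq θ (le_refl x)
        rw [shift_zero, zero_sub, neg_neg, ← le_sub_iff_add_le] at this
        rwa [add_zero]) n θ (le_refl x)
    rw [← fiberIter_mul, add_zero] at hle
    have hlow := hdev.lower (q * n) θ x
    push_cast at hlow
    linarith

/-- The lift of `F` to the `σ.den`-fold cover of the base, read in coordinates that rotate with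
slope `σ`. Its fibered rotation number is `ρ - σω` when that of `F` is `ρ`. -/
def IsQpfLift.coverLift (hF : IsQpfLift ω F) (σ : ℚ) : T1 → ℝ → ℝ := fun t x =>
  x + hF.displacement (σ.den • t, x + σ.num • t) - σ * ω

theorem den_nsmul_coe_div_den (σ : ℚ) (x : ℝ) : σ.den • ((x / σ.den : ℝ) : T1) = x := by
  rw [← coe_natCast_mul, mul_div_cancel₀ _ (Nat.cast_ne_zero.2 σ.den_nz)]

theorem ratCast_mul_eq (σ : ℚ) (ω : ℝ) : (σ : ℝ) * ω = σ.num * (ω / σ.den) := by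
  rw [Rat.cast_def, div_mul_eq_mul_div, mul_div_assoc]

theorem IsQpfLift.coverLift_coe (hF : IsQpfLift ω F) (σ : ℚ) (t x : ℝ) :
    hF.coverLift σ t x =
      F (σ.den • (t : T1)) (x + σ.num * t) - σ.num * (t + ω / σ.den) := by
  rw [coverLift, hF.apply_eq_add_displacement, AddCircle.coe_add, ← zsmul_eq_mul,
    AddCircle.coe_zsmul, ratCast_mul_eq, zsmul_eq_mul]
  ring

theorem IsQpfLift.fiberIter_shift_coverLift (hF : IsQpfLift ω F) (σ : ℚ) (s : ℝ) (n : ℕ)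
    (t x : ℝ) :
    fiberIter (ω / σ.den) (shift (hF.coverLift σ) s) n t x =
      fiberIter ω (shift F s) n (σ.den • (t : T1)) (x + σ.num * t) -
        σ.num * (t + n * (ω / σ.den)) := by
  induction n generalizing t x with
  | zero => simp [fiberIter]
  | succ n ih =>
    have hbase : σ.den • ((t + ω / σ.den : ℝ) : T1) = σ.den • (t : T1) + (ω : T1) := by
      rw [AddCircle.coe_add, smul_add, den_nsmul_coe_div_den]
    rw [fiberIter, fiberIter, ← AddCircle.coe_add, ih, hbase, shift, shift, hF.coverLift_coe]
    push_cast
    ring_nf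

theorem IsQpfLift.isQpfLift_coverLift (hF : IsQpfLift ω F) (σ : ℚ) :
    IsQpfLift (ω / σ.den) (hF.coverLift σ) where
  cont := by
    have : Continuous fun p : T1 × ℝ =>
        ((σ.den • p.1, (p.2 : T1) + σ.num • p.1) : T1 × T1) := by fun_prop
    exact (continuous_snd.add (hF.displacement.continuous.comp this)).sub continuous_const
  mono t x y hxy := by
    obtain ⟨t, rfl⟩ := QuotientAddGroup.mk_surjective t
    have := hF.mono (σ.den • (t : T1)) (add_lt_add_left hxy (σ.num * t))
    rw [hF.coverLift_coe, hF.coverLift_coe]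
    linarith
  surj t y := by
    obtain ⟨t, rfl⟩ := QuotientAddGroup.mk_surjective t
    obtain ⟨x, hx⟩ := hF.surj (σ.den • (t : T1)) (y + σ.num * (t + ω / σ.den))
    exact ⟨x - σ.num * t, by rw [hF.coverLift_coe, sub_add_cancel, hx, add_sub_cancel_right]⟩
  per t x := by
    rw [coverLift, coverLift, AddCircle.coe_add, AddCircle.coe_period, add_zero]
    ring

theorem IsQpfLift.coverLift_add_of_nsmul_eq_zero (hF : IsQpfLift ω F) {σ : ℚ} {a : T1} {b : ℝ}
    (ha : σ.den • a = 0) (hb : (b : T1) + σ.num • a = 0) (t : T1) (x : ℝ) :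
    hF.coverLift σ (t + a) (x + b) = hF.coverLift σ t x + b := by
  have hsnd : ((x + b : ℝ) : T1) + σ.num • (t + a) = x + σ.num • t := by
    rw [AddCircle.coe_add, smul_add, add_add_add_comm, hb, add_zero]
  rw [coverLift, coverLift, hsnd, smul_add, ha, add_zero]
  ring

theorem HasBoundedDeviation.coverLift (hdev : HasBoundedDeviation ω F ρ ε C)
    (hF : IsQpfLift ω F) (σ : ℚ) :
    HasBoundedDeviation (ω / σ.den) (hF.coverLift σ) (ρ - σ * ω) ε C where
  upper n t x := by
    obtain ⟨t, rfl⟩ := QuotientAddGroup.mk_surjective t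
    rw [hF.fiberIter_shift_coverLift, ratCast_mul_eq]
    linarith [hdev.upper n (σ.den • (t : T1)) (x + σ.num * t)]
  lower n t x := by
    obtain ⟨t, rfl⟩ := QuotientAddGroup.mk_surjective t
    rw [hF.fiberIter_shift_coverLift, ratCast_mul_eq]
    linarith [hdev.lower n (σ.den • (t : T1)) (x + σ.num * t)]

end RotationZero

section Semicontinuity

variable {X : Type*} [TopologicalSpace X] {u v : X → ℝ}

theorem exists_eventually_lt_and_lt (hv : UpperSemicontinuous v) (hu : LowerSemicontinuous u)
    {x : X} (hx : v x < u x) : ∃ c, ∀ᶠ y in 𝓝 x, v y < c ∧ c < u y := by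
  obtain ⟨c, hvc, hcu⟩ := exists_between hx
  exact ⟨c, (hv x c hvc).and (hu x c hcu)⟩

theorem isClosed_setOf_le_of_semicontinuous (hu : LowerSemicontinuous u)
    (hv : UpperSemicontinuous v) : IsClosed {x | u x ≤ v x} := by
  rw [← isOpen_compl_iff, isOpen_iff_eventually]
  intro x hx
  obtain ⟨c, hc⟩ := exists_eventually_lt_and_lt hv hu (not_le.1 hx)
  exact hc.mono fun y hy => not_le.2 (hy.1.trans hy.2)

theorem exists_continuousMap_between [NormalSpace X] [ParacompactSpace X]
    (hv : UpperSemicontinuous v) (hu : LowerSemicontinuous u) (hvu : ∀ x, v x < u x) :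
    ∃ w : C(X, ℝ), ∀ x, w x ∈ Set.Ioo (v x) (u x) :=
  exists_continuous_forall_mem_convex_of_local_const (fun _ => convex_Ioo _ _)
    fun x => exists_eventually_lt_and_lt hv hu (hvu x)

/-- The least upper semicontinuous function above `u`, for bounded `u`. -/
def upperEnvelope (u : X → ℝ) (x : X) : ℝ := limsup u (𝓝 x)

variable {a b : ℝ}

theorem le_upperEnvelope (hub : ∀ x, u x ≤ b) (x : X) : u x ≤ upperEnvelope u x :=
  le_limsup_of_frequently_le (fun h => h.self_of_nhds le_rfl) (isBoundedUnder_of ⟨b, hub⟩)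

theorem upperEnvelope_le (hau : ∀ x, a ≤ u x) {x : X} (h : ∀ᶠ y in 𝓝 x, u y ≤ b) :
    upperEnvelope u x ≤ b :=
  limsup_le_of_le (isCoboundedUnder_le_of_le _ hau) h

theorem upperSemicontinuous_upperEnvelope (hau : ∀ x, a ≤ u x) (hub : ∀ x, u x ≤ b) :
    UpperSemicontinuous (upperEnvelope u) := by
  intro x y hy
  obtain ⟨z, hz, hzy⟩ := exists_between hy
  have hlt : ∀ᶠ x' in 𝓝 x, u x' < z := eventually_lt_of_limsup_lt hz (isBoundedUnder_of ⟨b, hub⟩)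
  exact hlt.eventually_nhds.mono fun x' hx' =>
    (upperEnvelope_le hau (hx'.mono fun _ => le_of_lt)).trans_lt hzy

end Semicontinuity

section AttractingGraph

variable {ω η a b : ℝ} {F : T1 → ℝ → ℝ} {u v w : T1 → ℝ}

/-- The graph transform: the `n`-th iterate of `F` maps the graph of `u` to that of
`pushGraph ω F n u`. -/
def pushGraph (ω : ℝ) (F : T1 → ℝ → ℝ) (n : ℕ) (u : T1 → ℝ) (θ : T1) : ℝ :=
  fiberIter ω F n (θ - n • (ω : T1)) (u (θ - n • (ω : T1)))

theorem pushGraph_add_nsmul (n : ℕ) (u : T1 → ℝ) (θ : T1) :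
    pushGraph ω F n u (θ + n • (ω : T1)) = fiberIter ω F n θ (u θ) := by
  rw [pushGraph, add_sub_cancel_right]

theorem pushGraph_one (u : T1 → ℝ) (θ : T1) :
    pushGraph ω F 1 u θ = F (θ - ω) (u (θ - ω)) := by
  rw [pushGraph, one_nsmul, fiberIter, fiberIter]

theorem pushGraph_succ (n : ℕ) (u : T1 → ℝ) :
    pushGraph ω F (n + 1) u = pushGraph ω F n (pushGraph ω F 1 u) := by
  ext θ
  rw [pushGraph, pushGraph, pushGraph_one, fiberIter, succ_nsmul, sub_add_eq_sub_sub,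
    sub_add_cancel]

theorem pushGraph_succ_apply_add (n : ℕ) (u : T1 → ℝ) (θ : T1) :
    pushGraph ω F (n + 1) u (θ + ω) = F θ (pushGraph ω F n u θ) := by
  rw [pushGraph, pushGraph, fiberIter_succ_right, succ_nsmul, add_sub_add_right_eq_sub,
    sub_add_cancel]

theorem pushGraph_mono (hF : ∀ θ, StrictMono (F θ)) (n : ℕ) (huv : u ≤ v) :
    pushGraph ω F n u ≤ pushGraph ω F n v := fun _ =>
  (fiberIter_strictMono hF n _).monotone (huv _)

theorem antitone_pushGraph (hF : ∀ θ, StrictMono (F θ)) (hu : ∀ θ, F θ (u θ) ≤ u (θ + ω)) :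
    Antitone fun n => pushGraph ω F n u :=
  antitone_nat_of_succ_le fun n => by
    rw [pushGraph_succ]
    refine pushGraph_mono hF n fun θ => ?_
    simpa [pushGraph_one] using hu (θ - ω)

theorem upperSemicontinuous_pushGraph (hF : ∀ θ, StrictMono (F θ))
    (hcont : Continuous fun p : T1 × ℝ => F p.1 p.2) (hu : UpperSemicontinuous u) (n : ℕ) :
    UpperSemicontinuous (pushGraph ω F n u) := by
  suffices h : UpperSemicontinuous fun θ => fiberIter ω F n θ (u θ) from
    h.comp (continuous_sub_right _)
  intro θ y hy
  have hcontn := continuous_fiberIter (ω := ω) hcont n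
  obtain ⟨z, huz, hzy⟩ :=
    ((hcontn.comp (.prodMk_right θ)).continuousAt.eventually_lt_const hy).exists_gt
  filter_upwards [hu θ z huz, (hcontn.comp (.prodMk_left z)).continuousAt.eventually_lt_const hzy]
    with θ' hθ' hz
  exact ((fiberIter_strictMono hF n θ') hθ').trans hz

theorem apply_upperEnvelope_add_le (hcont : Continuous fun p : T1 × ℝ => F p.1 p.2)
    (hF : ∀ θ, StrictMono (F θ)) (hau : ∀ θ, a ≤ u θ) (hub : ∀ θ, u θ ≤ b)
    (hstep : ∀ θ, F θ (u θ) + η ≤ u (θ + ω)) (θ : T1) :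
    F θ (upperEnvelope u θ) + η ≤ upperEnvelope u (θ + ω) := by
  refine le_of_forall_gt_imp_ge_of_dense fun y hy => ?_
  by_contra! hlt
  have hlt : y - η < F θ (upperEnvelope u θ) := by linarith
  obtain ⟨z, hz, hyz⟩ :=
    ((hcont.comp (.prodMk_right θ)).continuousAt.eventually_const_lt hlt).exists_lt
  refine hz.not_ge (upperEnvelope_le hau ?_)
  have hnear : ∀ᶠ θ' in 𝓝 θ, u (θ' + ω) < y :=
    (continuous_add_const (ω : T1)).continuousAt.eventually
      (eventually_lt_of_limsup_lt hy (isBoundedUnder_of ⟨b, hub⟩))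
  filter_upwards [hnear, (hcont.comp (.prodMk_left z)).continuousAt.eventually_const_lt hyz]
    with θ' hθ' hyz'
  refine ((hF θ').lt_iff_lt.1 (lt_trans ?_ hyz')).le
  linarith [hstep θ']

theorem le_pushGraph_of_forall_le_pushGraph (hω : Irrational ω)
    (hcont : Continuous fun p : T1 × ℝ => F p.1 p.2) (hF : ∀ θ, StrictMono (F θ))
    (hu : LowerSemicontinuous u) (hv : UpperSemicontinuous v)
    (hstep : ∀ θ, F θ (u θ) ≤ u (θ + ω)) {θ₀ : T1} (hθ₀ : ∀ n, u θ₀ ≤ pushGraph ω F n v θ₀)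
    (n : ℕ) (θ : T1) : u θ ≤ pushGraph ω F n v θ := by
  have hback : ∀ θ, (∀ n, u θ ≤ pushGraph ω F n v θ) →
      ∀ n, u (θ - ω) ≤ pushGraph ω F n v (θ - ω) := by
    intro θ hθ n
    have hpush := pushGraph_succ_apply_add (ω := ω) (F := F) n v (θ - ω)
    have hle := hstep (θ - ω)
    rw [sub_add_cancel] at hpush hle
    exact (hF (θ - ω)).le_iff_le.1 (hle.trans ((hθ (n + 1)).trans_eq hpush))
  refine isClosed_property (denseRange_add_nsmul_coe hω.neg θ₀)
    (isClosed_setOf_le_of_semicontinuous hu (upperSemicontinuous_pushGraph hF hcont hv n))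
    (fun m => ?_) θ
  induction m generalizing n with
  | zero => simpa using hθ₀ n
  | succ m ih =>
    rw [succ_nsmul, ← add_assoc, AddCircle.coe_neg, ← sub_eq_add_neg]
    exact hback _ ih n

theorem exists_pushGraph_one_upperEnvelope_lt (hcont : Continuous fun p : T1 × ℝ => F p.1 p.2)
    (hF : ∀ θ, StrictMono (F θ)) (hη : 0 < η) (hau : ∀ θ, a ≤ u θ) (hub : ∀ θ, u θ ≤ b)
    (hstep : ∀ θ, F θ (u θ) + η ≤ u (θ + ω)) :
    ∃ θ, pushGraph ω F 1 (upperEnvelope u) θ < u θ := by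
  by_contra! hle
  have hgap : ∀ θ, u θ ≤ (⨆ θ, u θ) - η := by
    intro θ
    have hpush := (hle θ).trans_eq (pushGraph_one _ θ)
    have henv := apply_upperEnvelope_add_le hcont hF hau hub hstep (θ - ω)
    rw [sub_add_cancel] at henv
    have hsup : upperEnvelope u θ ≤ ⨆ θ, u θ := upperEnvelope_le hau
      (.of_forall fun θ' => le_ciSup ⟨b, Set.forall_mem_range.2 hub⟩ θ')
    linarith
  linarith [ciSup_le hgap]

theorem exists_forall_pushGraph_upperEnvelope_lt (hω : Irrational ω)
    (hcont : Continuous fun p : T1 × ℝ => F p.1 p.2) (hF : ∀ θ, StrictMono (F θ)) (hη : 0 < η)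
    (hu : LowerSemicontinuous u) (hau : ∀ θ, a ≤ u θ) (hub : ∀ θ, u θ ≤ b)
    (hstep : ∀ θ, F θ (u θ) + η ≤ u (θ + ω)) :
    ∃ N, ∀ θ, pushGraph ω F N (upperEnvelope u) θ < u θ := by
  set v := upperEnvelope u
  have hv : UpperSemicontinuous v := upperSemicontinuous_upperEnvelope hau hub
  have hanti := antitone_pushGraph hF fun θ =>
    (le_add_of_nonneg_right hη.le).trans (apply_upperEnvelope_add_le hcont hF hau hub hstep θ)
  have hclosed (n : ℕ) : IsClosed {θ | u θ ≤ pushGraph ω F n v θ} :=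
    isClosed_setOf_le_of_semicontinuous hu (upperSemicontinuous_pushGraph hF hcont hv n)
  by_contra! hne
  obtain ⟨θ₀, hθ₀⟩ : (⋂ n, {θ | u θ ≤ pushGraph ω F n v θ}).Nonempty :=
    IsCompact.nonempty_iInter_of_sequence_nonempty_isCompact_isClosed _
      (fun n θ hθ => le_trans hθ (hanti n.le_succ θ)) hne (hclosed 0).isCompact hclosed
  obtain ⟨θ, hlt⟩ := exists_pushGraph_one_upperEnvelope_lt hcont hF hη hau hub hstep
  exact hlt.not_ge (le_pushGraph_of_forall_le_pushGraph hω hcont hF hu hv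
    (fun θ => (le_add_of_nonneg_right hη.le).trans (hstep θ)) (Set.mem_iInter.1 hθ₀) 1 θ)

theorem exists_forall_continuousMap_pushGraph_between (hω : Irrational ω)
    (hcont : Continuous fun p : T1 × ℝ => F p.1 p.2) (hF : ∀ θ, StrictMono (F θ)) (hη : 0 < η)
    (hu : LowerSemicontinuous u) (hau : ∀ θ, a ≤ u θ) (hub : ∀ θ, u θ ≤ b)
    (hstep : ∀ θ, F θ (u θ) + η ≤ u (θ + ω)) :
    ∃ N, ∀ n ≥ N, ∃ w : C(T1, ℝ), ∀ θ, w θ ∈ Set.Ioo (pushGraph ω F n u θ) (u θ) := by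
  obtain ⟨N, hN⟩ := exists_forall_pushGraph_upperEnvelope_lt hω hcont hF hη hu hau hub hstep
  have hanti := antitone_pushGraph hF fun θ =>
    (le_add_of_nonneg_right hη.le).trans (apply_upperEnvelope_add_le hcont hF hau hub hstep θ)
  refine ⟨N, fun n hn => ?_⟩
  obtain ⟨w, hw⟩ := exists_continuousMap_between
    (upperSemicontinuous_pushGraph hF hcont (upperSemicontinuous_upperEnvelope hau hub) n) hu
    fun θ => (hanti hn θ).trans_lt (hN θ)
  exact ⟨w, fun θ => ⟨(pushGraph_mono hF n (le_upperEnvelope hub) θ).trans_lt (hw θ).1, (hw θ).2⟩⟩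

theorem pushGraph_reflect_neg (n : ℕ) (u : T1 → ℝ) (θ : T1) :
    pushGraph ω (reflect F) n (-u) θ = -pushGraph ω F n u θ := by
  rw [pushGraph, fiberIter_reflect, Pi.neg_apply, neg_neg, pushGraph]

theorem exists_forall_continuousMap_between_pushGraph (hω : Irrational ω) (hF : IsQpfLift ω F)
    (hη : 0 < η) (hu : UpperSemicontinuous u) (hau : ∀ θ, a ≤ u θ) (hub : ∀ θ, u θ ≤ b)
    (hstep : ∀ θ, u (θ + ω) + η ≤ F θ (u θ)) :
    ∃ N, ∀ n ≥ N, ∃ w : C(T1, ℝ), ∀ θ, w θ ∈ Set.Ioo (u θ) (pushGraph ω F n u θ) := by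
  obtain ⟨N, hN⟩ := exists_forall_continuousMap_pushGraph_between hω hF.reflect.cont
    hF.reflect.mono hη (u := -u)
    (continuous_neg.comp_upperSemicontinuous_antitone hu fun _ _ => neg_le_neg)
    (fun θ => neg_le_neg (hub θ)) (fun θ => neg_le_neg (hau θ)) fun θ => by
      simp only [reflect, Pi.neg_apply, neg_neg]
      linarith [hstep θ]
  refine ⟨N, fun n hn => ?_⟩
  obtain ⟨w, hw⟩ := hN n hn
  refine ⟨-w, fun θ => ⟨lt_neg.1 (hw θ).2, neg_lt.1 ?_⟩⟩
  rw [← pushGraph_reflect_neg]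
  exact (hw θ).1

end AttractingGraph

section BallSup

variable {X ι : Type*} [PseudoMetricSpace X] {t : ι → X} {z : ι → ℝ} {r b : ℝ}

/-- The supremum of the values `z i` attached to the points `t i` at distance less than `r`. -/
def ballSup (t : ι → X) (z : ι → ℝ) (r : ℝ) (x : X) : ℝ := ⨆ i : {i // dist x (t i) < r}, z i

theorem le_ballSup (hz : ∀ i, z i ≤ b) {x : X} {i : ι} (hi : dist x (t i) < r) :
    z i ≤ ballSup t z r x :=
  le_ciSup (f := fun i : {i // dist x (t i) < r} => z i)
    ⟨b, Set.forall_mem_range.2 fun i => hz i⟩ ⟨i, hi⟩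

theorem lowerSemicontinuous_ballSup (ht : ∀ x, ∃ i, dist x (t i) < r) (hz : ∀ i, z i ≤ b) :
    LowerSemicontinuous (ballSup t z r) := by
  intro x y hy
  have : Nonempty {i // dist x (t i) < r} := nonempty_subtype.2 (ht x)
  obtain ⟨⟨i, hi⟩, hyi⟩ := exists_lt_of_lt_ciSup hy
  filter_upwards [(continuous_id.dist continuous_const).continuousAt.eventually_lt_const hi]
    with x' hx'
  exact hyi.trans_le (le_ballSup hz hx')

end BallSup

section TrappingStrip

variable {ω ε η C κ c : ℝ} {F : T1 → ℝ → ℝ}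

theorem IsQpfLift.apply_ballSup_add_le (hF : IsQpfLift ω F) {t : ℕ → T1} {z : ℕ → ℝ} {b r : ℝ}
    (hdense : ∀ θ, ∃ n, dist θ (t n) < r) (hz : ∀ n, z n ≤ b) (htω : ∀ n, t (n + 1) = t n + ω)
    (hzF : ∀ n, F (t n) (z n) + (η + η) ≤ z (n + 1))
    (hclose : ∀ θ θ' : T1, dist θ θ' < r → ∀ x, F θ x ≤ F θ' x + η) (θ : T1) :
    F θ (ballSup t z r θ) + η ≤ ballSup t z r (θ + ω) := by
  have : Nonempty {n // dist θ (t n) < r} := nonempty_subtype.2 (hdense θ)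
  have hcont : Continuous (F θ) := hF.cont.comp (.prodMk_right θ)
  have hbdd : BddAbove (Set.range fun n : {n // dist θ (t n) < r} => z n) :=
    ⟨b, Set.forall_mem_range.2 fun n => hz n⟩
  rw [← le_sub_iff_add_le, ballSup,
    (hF.mono θ).monotone.map_ciSup_of_continuousAt hcont.continuousAt hbdd]
  refine ciSup_le fun ⟨n, hn⟩ => ?_
  have hnext : dist (θ + ω) (t (n + 1)) < r := by rwa [htω, dist_add_right]
  linarith [hclose _ _ hn (z n), hzF n, le_ballSup hz hnext]

theorem HasBoundedDeviation.exists_upper_graph (hdev : HasBoundedDeviation ω F 0 ε C)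
    (hF : IsQpfLift ω F) (hω : Irrational ω) (hε : 0 < ε) (hκ : 0 < κ) :
    ∃ (c : ℝ) (θ₀ : T1) (η : ℝ) (u : T1 → ℝ), 0 < η ∧ LowerSemicontinuous u ∧
      (∀ θ, u θ ≤ lowerGraph ω (shift F (-ε)) 0 (c + κ) θ) ∧
      (∀ θ, F θ (u θ) + η ≤ u (θ + ω)) ∧
      ∀ n : ℕ, lowerGraph ω (shift F (-ε)) 0 c (θ₀ + n • (ω : T1)) ≤ u (θ₀ + n • (ω : T1)) := by
  have hG := hF.shift (-ε)
  have hη : 0 < ε / 4 := by linarith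
  obtain ⟨δ, hδ, θ₀, c, htrap⟩ :=
    hdev.exists_trapped_orbit hF (show ε / 4 + ε / 4 < ε by linarith) hκ
  obtain ⟨δ', hδ', hclose⟩ := hF.exists_dist_lt_fiberIter_shift_le hη
  simp only [mul_zero, add_zero] at htrap
  set t : ℕ → T1 := fun n => θ₀ + n • (ω : T1)
  set z : ℕ → ℝ :=
    fun n => fiberIter ω (shift F (ε / 4 + ε / 4)) n θ₀ (lowerGraph ω (shift F (-ε)) 0 c θ₀)
  have hr : 0 < min δ δ' := lt_min hδ hδ'
  have ht : ∀ θ, ∃ n, dist θ (t n) < min δ δ' := fun θ =>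
    (denseRange_add_nsmul_coe hω θ₀).exists_dist_lt θ hr
  have hz : ∀ n, z n ≤ c + κ := fun n =>
    (htrap n (t n) (by rwa [dist_self])).trans (lowerGraph_le hdev.lower _ _)
  have htω : ∀ n, t (n + 1) = t n + ω := fun n => by simp only [t, succ_nsmul, add_assoc]
  have hzF : ∀ n, F (t n) (z n) + (ε / 4 + ε / 4) ≤ z (n + 1) := fun n =>
    (fiberIter_succ_right ω (shift F (ε / 4 + ε / 4)) n θ₀ _).ge
  refine ⟨c, θ₀, ε / 4, ballSup t z (min δ δ'), hη, lowerSemicontinuous_ballSup ht hz,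
    fun θ => ?_, hF.apply_ballSup_add_le ht hz htω hzF fun θ θ' hθ x => ?_, fun n => ?_⟩
  · have : Nonempty {n // dist θ (t n) < min δ δ'} := nonempty_subtype.2 (ht θ)
    exact ciSup_le fun ⟨n, hn⟩ => htrap n θ (hn.trans_le (min_le_left _ _))
  · have := hclose _ _ (hθ.trans_le (min_le_right _ _)) 1 x x le_rfl
    rwa [shift_zero] at this
  · have hbelow := lowerGraph_add_nsmul_le_fiberIter hG hdev.lower n c θ₀
    rw [mul_zero, add_zero] at hbelow
    exact hbelow.trans ((hF.fiberIter_shift_mono (by linarith) n θ₀ le_rfl).trans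
      (le_ballSup hz (by rwa [dist_self])))

theorem fiberIter_mem_Ioo_of_mem_Icc (hF : ∀ θ, StrictMono (F θ)) {N : ℕ} {g l u U : T1 → ℝ}
    (hl : ∀ θ, l θ ∈ Set.Ioo (g θ) (pushGraph ω F N g θ))
    (hu : ∀ θ, u θ ∈ Set.Ioo (pushGraph ω F N U θ) (U θ)) {θ : T1} {x : ℝ}
    (hx : x ∈ Set.Icc (l θ) (u θ)) :
    fiberIter ω F N θ x ∈ Set.Ioo (l (θ + N • (ω : T1))) (u (θ + N • (ω : T1))) := by
  have hmono := fiberIter_strictMono (ω := ω) hF N θ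
  have hl' := (hl (θ + N • (ω : T1))).2
  have hu' := (hu (θ + N • (ω : T1))).1
  rw [pushGraph_add_nsmul] at hl' hu'
  exact ⟨hl'.trans (hmono ((hl θ).1.trans_le hx.1)), (hmono (hx.2.trans_lt (hu θ).2)).trans hu'⟩

theorem lt_of_pushGraph_between (hF : ∀ θ, StrictMono (F θ)) (hω : Irrational ω) {N : ℕ}
    {g U : T1 → ℝ} {l u : C(T1, ℝ)} {θ₀ : T1}
    (hgU : ∀ n : ℕ, g (θ₀ + n • (ω : T1)) ≤ U (θ₀ + n • (ω : T1)))
    (hl : ∀ θ, l θ ∈ Set.Ioo (g θ) (pushGraph ω F N g θ))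
    (hu : ∀ θ, u θ ∈ Set.Ioo (pushGraph ω F N U θ) (U θ)) (θ : T1) : l θ < u θ := by
  have hle : ∀ θ, l θ ≤ u θ := by
    refine isClosed_property (denseRange_add_nsmul_coe hω (θ₀ + N • (ω : T1)))
      (isClosed_le l.continuous u.continuous) fun n => ?_
    have hl' := (hl (θ₀ + n • (ω : T1) + N • (ω : T1))).2
    have hu' := (hu (θ₀ + n • (ω : T1) + N • (ω : T1))).1
    rw [pushGraph_add_nsmul] at hl' hu'
    rw [add_right_comm]
    exact (hl'.trans_le ((fiberIter_strictMono hF N _).monotone (hgU n))).le.trans hu'.le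
  have hmem := fiberIter_mem_Ioo_of_mem_Icc hF hl hu
    (Set.left_mem_Icc.2 (hle (θ - N • (ω : T1))))
  rw [sub_add_cancel] at hmem
  exact hmem.1.trans hmem.2

theorem HasBoundedDeviation.exists_trapping_strip (hdev : HasBoundedDeviation ω F 0 ε C)
    (hF : IsQpfLift ω F) (hω : Irrational ω) (hε : 0 < ε) (hκ : 0 < κ) :
    ∃ (N : ℕ) (c : ℝ) (l u : C(T1, ℝ)), 1 ≤ N ∧
      (∀ θ, lowerGraph ω (shift F (-ε)) 0 c θ < l θ) ∧ (∀ θ, l θ < u θ) ∧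
      (∀ θ, u θ < lowerGraph ω (shift F (-ε)) 0 (c + κ) θ) ∧
      ∀ θ, ∀ x ∈ Set.Icc (l θ) (u θ),
        fiberIter ω F N θ x ∈ Set.Ioo (l (θ + N • (ω : T1))) (u (θ + N • (ω : T1))) := by
  have hG := hF.shift (-ε)
  obtain ⟨c, θ₀, η, U, hη, hU, hUκ, hUstep, hgU⟩ := hdev.exists_upper_graph hF hω hε hκ
  obtain ⟨a, ha⟩ := hU.lowerSemicontinuousOn _ |>.bddBelow_of_isCompact isCompact_univ
  obtain ⟨N₁, hN₁⟩ := exists_forall_continuousMap_between_pushGraph hω hF hε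
    (upperSemicontinuous_lowerGraph hG hdev.lower c) (sub_le_lowerGraph hdev.lower c)
    (lowerGraph_le hdev.lower c) fun θ => by
      have := lowerGraph_add_le_apply hG hdev.lower c θ
      rw [add_zero, shift] at this
      linarith
  obtain ⟨N₂, hN₂⟩ := exists_forall_continuousMap_pushGraph_between hω hF.cont hF.mono hη hU
    (fun θ => ha ⟨θ, trivial, rfl⟩)
    (fun θ => (hUκ θ).trans (lowerGraph_le hdev.lower _ θ)) hUstep
  obtain ⟨l, hl⟩ := hN₁ (N₁ + N₂ + 1) (by omega)
  obtain ⟨u, hu⟩ := hN₂ (N₁ + N₂ + 1) (by omega)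
  exact ⟨N₁ + N₂ + 1, c, l, u, by omega, fun θ => (hl θ).1,
    lt_of_pushGraph_between hF.mono hω hgU hl hu, fun θ => (hu θ).2.trans_le (hUκ θ),
    fun θ x hx => fiberIter_mem_Ioo_of_mem_Icc hF.mono hl hu hx⟩

end TrappingStrip

section SkewProduct

variable {ω : ℝ} {F : T1 → ℝ → ℝ}

/-- The skew product `(θ, x) ↦ (θ + ω, F_θ(x))` on `T¹ × ℝ`. -/
def skewProduct (ω : ℝ) (F : T1 → ℝ → ℝ) (p : T1 × ℝ) : T1 × ℝ := (p.1 + ω, F p.1 p.2)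

theorem iterate_skewProduct (n : ℕ) (p : T1 × ℝ) :
    (skewProduct ω F)^[n] p = (p.1 + n • (ω : T1), fiberIter ω F n p.1 p.2) := by
  induction n generalizing p with
  | zero => simp [fiberIter]
  | succ n ih => rw [Function.iterate_succ_apply, ih, skewProduct, fiberIter, succ_nsmul',
      add_assoc]

end SkewProduct

section CoverProj

variable {σ : ℚ} {a : T1} {b : ℝ}

/-- The covering `(t, x) ↦ (σ.den t, x + σ.num t)` of the torus by `T¹ × ℝ`; horizontal circles
wind around the torus with slope `σ`. -/
def coverProj (σ : ℚ) : T1 × ℝ →+ T1 × T1 :=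
  AddMonoidHom.mk' (fun p => (σ.den • p.1, (p.2 : T1) + σ.num • p.1)) fun p p' => by
    simp only [Prod.fst_add, Prod.snd_add, AddCircle.coe_add, smul_add, add_add_add_comm,
      Prod.mk_add_mk]

theorem coverProj_apply (σ : ℚ) (t : T1) (x : ℝ) :
    coverProj σ (t, x) = (σ.den • t, (x : T1) + σ.num • t) := rfl

theorem continuous_coverProj (σ : ℚ) : Continuous (coverProj σ) := by
  change Continuous fun p : T1 × ℝ => (σ.den • p.1, (p.2 : T1) + σ.num • p.1)
  fun_prop

theorem surjective_coverProj (σ : ℚ) : Function.Surjective (coverProj σ) := by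
  rintro ⟨θ, y⟩
  obtain ⟨θ, rfl⟩ := QuotientAddGroup.mk_surjective θ
  obtain ⟨x, hx⟩ := QuotientAddGroup.mk_surjective (y - σ.num • ((θ / σ.den : ℝ) : T1))
  refine ⟨((θ / σ.den : ℝ), x), Prod.ext ?_ ?_⟩
  · exact den_nsmul_coe_div_den σ θ
  · exact (congrArg (· + _) hx).trans (sub_add_cancel _ _)

theorem isOpenMap_coverProj (σ : ℚ) : IsOpenMap (coverProj σ) :=
  (coverProj σ).isOpenMap_of_sigmaCompact (surjective_coverProj σ) (continuous_coverProj σ)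

theorem coverProj_eq_zero_iff :
    coverProj σ (a, b) = 0 ↔ σ.den • a = 0 ∧ (b : T1) + σ.num • a = 0 :=
  Prod.mk_eq_zero

theorem coverProj_add_int (σ : ℚ) (t : T1) (x : ℝ) (j : ℤ) :
    coverProj σ (t, x + j) = coverProj σ (t, x) := by
  rw [coverProj_apply, coverProj_apply, AddCircle.coe_add, ← zsmul_one (j : ℤ), AddCircle.coe_zsmul,
    AddCircle.coe_period, smul_zero, add_zero]

theorem eq_zero_of_coverProj_eq_zero (h : coverProj σ (a, 0) = 0) : a = 0 := by
  obtain ⟨hden, hnum⟩ := coverProj_eq_zero_iff.1 h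
  rw [AddCircle.coe_zero, zero_add, ← natAbs_nsmul_eq_zero] at hnum
  exact AddMonoid.addOrderOf_eq_one_iff.1 (Nat.eq_one_of_dvd_coprimes σ.reduced
    (addOrderOf_dvd_of_nsmul_eq_zero hnum) (addOrderOf_dvd_of_nsmul_eq_zero hden))

theorem inv_den_le_of_coverProj_eq_zero (h : coverProj σ (a, b) = 0) (hb : 0 < b) :
    (σ.den : ℝ)⁻¹ ≤ b := by
  obtain ⟨hden, hnum⟩ := coverProj_eq_zero_iff.1 h
  have hzero : ((σ.den * b : ℝ) : T1) = (0 : ℝ) := by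
    rw [coe_natCast_mul, eq_neg_of_add_eq_zero_left hnum, smul_neg, smul_comm, hden, smul_zero,
      neg_zero, AddCircle.coe_zero]
  obtain ⟨j, hj⟩ := exists_int_eq_add_of_coe_eq_coe hzero
  have hden_pos : (0 : ℝ) < σ.den := Nat.cast_pos.2 σ.pos
  have hj_pos : (0 : ℝ) < j := by
    rw [← zero_add (j : ℝ), ← hj]
    positivity
  rw [inv_le_iff_one_le_mul₀' hden_pos, hj, zero_add]
  exact_mod_cast Int.cast_pos.1 hj_pos

end CoverProj

section Annulus

/-- The closed region between the graphs of `l` and `u`. -/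
def closedStrip {X : Type*} (l u : X → ℝ) : Set (X × ℝ) := {p | p.2 ∈ Set.Icc (l p.1) (u p.1)}

theorem injOn_coverProj_closedStrip {ω ρ C c : ℝ} {σ : ℚ} {G : T1 → ℝ → ℝ} {l u : T1 → ℝ}
    (hG : IsQpfLift ω G) (hlow : ∀ n θ x, x + n * ρ - C ≤ fiberIter ω G n θ x)
    (hsymm : ∀ a b, coverProj σ (a, b) = 0 → ∀ t x, G (t + a) (x + b) = G t x + b)
    (hl : ∀ t, lowerGraph ω G ρ c t < l t)
    (hu : ∀ t, u t < lowerGraph ω G ρ (c + (σ.den : ℝ)⁻¹) t) :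
    Set.InjOn (coverProj σ) (closedStrip l u) := by
  have hle : ∀ p ∈ closedStrip l u, ∀ p' ∈ closedStrip l u, coverProj σ p = coverProj σ p' →
      p'.2 ≤ p.2 := by
    rintro ⟨t, x⟩ hp ⟨t', x'⟩ hp' heq
    by_contra! hlt
    have hker : coverProj σ (t' - t, x' - x) = 0 := by
      rw [← Prod.mk_sub_mk, map_sub, heq, sub_self]
    have hκ := inv_den_le_of_coverProj_eq_zero hker (sub_pos.2 hlt)
    have hshift := lowerGraph_add_of_equivariant hlow (hsymm _ _ hker) c t
    have hmono := lowerGraph_mono hG hlow t' (add_le_add_right hκ c)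
    rw [add_sub_cancel] at hshift
    linarith [hp.1, hp'.2, hl t, hu t']
  intro p hp p' hp' heq
  have hsnd : p.2 = p'.2 := le_antisymm (hle p' hp' p hp heq.symm) (hle p hp p' hp' heq)
  refine Prod.ext (sub_eq_zero.1 (eq_zero_of_coverProj_eq_zero (σ := σ) ?_)) hsnd
  rw [← sub_eq_zero.2 hsnd, ← Prod.mk_sub_mk, map_sub, heq, sub_self]

/-- The parametrization of `closedStrip l u` by `X × [0, 1]` that is affine on each fiber. -/
def stripChart {X : Type*} (l u : X → ℝ) (p : X × Set.Icc (0 : ℝ) 1) : X × ℝ :=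
  (p.1, AffineMap.lineMap (l p.1) (u p.1) (p.2 : ℝ))

section StripChart

variable {X : Type*} {l u : X → ℝ}

theorem continuous_stripChart [TopologicalSpace X] (hl : Continuous l) (hu : Continuous u) :
    Continuous (stripChart l u) := by
  unfold stripChart
  simp only [AffineMap.lineMap_apply_module]
  fun_prop

theorem injective_stripChart (hlu : ∀ x, l x < u x) : Function.Injective (stripChart l u) := by
  rintro ⟨x, s⟩ ⟨x', s'⟩ h
  obtain ⟨rfl, hs⟩ := Prod.ext_iff.1 h
  exact Prod.ext rfl (Subtype.ext (AffineMap.lineMap_injective ℝ (hlu x).ne hs))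

theorem range_stripChart (hlu : ∀ x, l x < u x) :
    Set.range (stripChart l u) = closedStrip l u := by
  have hfiber (x : X) : AffineMap.lineMap (l x) (u x) '' Set.Icc (0 : ℝ) 1 =
      Set.Icc (l x) (u x) := by
    rw [← segment_eq_image_lineMap, segment_eq_Icc (hlu x).le]
  ext ⟨x, y⟩
  change (x, y) ∈ Set.range (stripChart l u) ↔ y ∈ Set.Icc (l x) (u x)
  rw [← hfiber]
  constructor
  · rintro ⟨⟨x', s⟩, h⟩
    obtain ⟨rfl, rfl⟩ := Prod.ext_iff.1 h
    exact ⟨s, s.2, rfl⟩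
  · rintro ⟨s, hs, rfl⟩
    exact ⟨(x, ⟨s, hs⟩), rfl⟩

end StripChart

theorem exists_annulus_of_semiconj {X Y : Type*} [TopologicalSpace X] [TopologicalSpace Y]
    {π : X × ℝ → Y} {l u : X → ℝ} {φ : X × ℝ → X × ℝ} {g : Y → Y} (hπ : Continuous π)
    (hπo : IsOpenMap π) (hl : Continuous l) (hu : Continuous u) (hlu : ∀ x, l x < u x)
    (hinj : Set.InjOn π (closedStrip l u)) (hsemi : Function.Semiconj π φ g)
    (htrap : ∀ p ∈ closedStrip l u, (φ p).2 ∈ Set.Ioo (l (φ p).1) (u (φ p).1)) :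
    ∃ e : X × Set.Icc (0 : ℝ) 1 → Y, Continuous e ∧ Function.Injective e ∧
      g '' Set.range e ⊆ interior (Set.range e) := by
  have hrange : Set.range (π ∘ stripChart l u) = π '' closedStrip l u := by
    rw [Set.range_comp, range_stripChart hlu]
  have hopen : IsOpen {p : X × ℝ | l p.1 < p.2 ∧ p.2 < u p.1} :=
    (isOpen_lt (hl.comp continuous_fst) continuous_snd).inter
      (isOpen_lt continuous_snd (hu.comp continuous_fst))
  have hsub : {p : X × ℝ | l p.1 < p.2 ∧ p.2 < u p.1} ⊆ closedStrip l u :=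
    fun p hp => Set.Ioo_subset_Icc_self hp
  refine ⟨π ∘ stripChart l u, hπ.comp (continuous_stripChart hl hu), ?_, ?_⟩
  · intro p p' h
    have hmem (p) : stripChart l u p ∈ closedStrip l u :=
      range_stripChart hlu ▸ Set.mem_range_self p
    exact injective_stripChart hlu (hinj (hmem p) (hmem p') h)
  · rw [hrange]
    rintro _ ⟨_, ⟨p, hp, rfl⟩, rfl⟩
    rw [← hsemi.eq]
    exact interior_maximal (Set.image_mono hsub) (hπo _ hopen) ⟨φ p, htrap p hp, rfl⟩

end Annulus

section ReducedLift

variable {ω ρ ε C : ℝ} {F : T1 → ℝ → ℝ} {σ : ℚ} {q : ℕ} {k : ℤ}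

/-- The `q`-th iterate of the cover of `F` of slope `σ`, translated by `-k`. It covers the `q`-th
iterate of the torus map, and has fibered rotation number `0` when `q (ρ - σω) = k`. -/
def IsQpfLift.reducedLift (hF : IsQpfLift ω F) (σ : ℚ) (q : ℕ) (k : ℤ) : T1 → ℝ → ℝ :=
  shift (fiberIter (ω / σ.den) (hF.coverLift σ) q) (-k : ℤ)

theorem IsQpfLift.isQpfLift_reducedLift (hF : IsQpfLift ω F) (σ : ℚ) (q : ℕ) (k : ℤ) :
    IsQpfLift (q * (ω / σ.den)) (hF.reducedLift σ q k) :=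
  ((hF.isQpfLift_coverLift σ).iterate q).shift _

theorem HasBoundedDeviation.reducedLift (hdev : HasBoundedDeviation ω F ρ ε C)
    (hF : IsQpfLift ω F) (hε : 0 ≤ ε) (hq : 1 ≤ q) (hrel : q * (ρ - σ * ω) = k) :
    HasBoundedDeviation (q * (ω / σ.den)) (hF.reducedLift σ q k) 0 ε C := by
  have hcover := hF.isQpfLift_coverLift σ
  have := ((hdev.coverLift hF σ).iterate hcover hε hq).shift_int (hcover.iterate q) (-k)
  rwa [hrel, Int.cast_neg, add_neg_cancel, ← Int.cast_neg] at this

theorem IsQpfLift.shift_reducedLift_add_of_coverProj_eq_zero (hF : IsQpfLift ω F) (q : ℕ) (k : ℤ)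
    (s : ℝ) {a : T1} {b : ℝ} (h : coverProj σ (a, b) = 0) (t : T1) (x : ℝ) :
    shift (hF.reducedLift σ q k) s (t + a) (x + b) =
      shift (hF.reducedLift σ q k) s t x + b := by
  obtain ⟨ha, hb⟩ := coverProj_eq_zero_iff.1 h
  simp only [reducedLift, shift]
  rw [fiberIter_add_of_equivariant (hF.coverLift_add_of_nsmul_eq_zero ha hb)]
  ring

theorem IsQpfLift.semiconj_coverProj_coverLift (hF : IsQpfLift ω F) {f : T1 × T1 → T1 × T1}
    (hproj : ∀ (θ : T1) (x : ℝ), f (θ, (x : T1)) = (θ + (ω : T1), ((F θ x : ℝ) : T1))) (σ : ℚ) :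
    Function.Semiconj (coverProj σ) (skewProduct (ω / σ.den) (hF.coverLift σ)) f := by
  rintro ⟨t, x⟩
  obtain ⟨t, rfl⟩ := QuotientAddGroup.mk_surjective t
  have hnum (s : ℝ) : σ.num • (s : T1) = ((σ.num * s : ℝ) : T1) := by
    rw [← zsmul_eq_mul, AddCircle.coe_zsmul]
  change coverProj σ ((t : T1) + _, hF.coverLift σ t x) = f (coverProj σ ((t : T1), x))
  rw [coverProj_apply, coverProj_apply, hF.coverLift_coe, smul_add, den_nsmul_coe_div_den,
    ← AddCircle.coe_add, hnum, hnum, ← AddCircle.coe_add, ← AddCircle.coe_add, hproj,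
    sub_add_cancel]

theorem IsQpfLift.semiconj_coverProj_reducedLift (hF : IsQpfLift ω F) {f : T1 × T1 → T1 × T1}
    (hproj : ∀ (θ : T1) (x : ℝ), f (θ, (x : T1)) = (θ + (ω : T1), ((F θ x : ℝ) : T1))) (σ : ℚ)
    (q : ℕ) (k : ℤ) :
    Function.Semiconj (coverProj σ) (skewProduct (q * (ω / σ.den)) (hF.reducedLift σ q k))
      f^[q] := by
  rintro ⟨t, x⟩
  rw [← (hF.semiconj_coverProj_coverLift hproj σ).iterate_right q, iterate_skewProduct,
    skewProduct, coe_natCast_mul, reducedLift, shift, coverProj_add_int]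

end ReducedLift

/-- Theorem B: if `f` is mode-locked then some iterate of `f` maps a
closed annulus (a continuous injective image of `T¹ × [0,1]`), bounded by continuous
curves, into its own interior. -/
theorem mode_locking_annulus
    (ω : ℝ) (hω : Irrational ω)
    (F : T1 → ℝ → ℝ) (hF : IsQpfLift ω F)
    (f : T1 × T1 → T1 × T1) (hfc : Continuous f)
    (hproj : ∀ (θ : T1) (x : ℝ), f (θ, (x : T1)) = (θ + (ω : T1), ((F θ x : ℝ) : T1)))
    (ρ : ℝ) (hρ : HasRotNum ω F ρ)
    (hlock : ∃ ε : ℝ, 0 < ε ∧ HasRotNum ω (fun θ x => F θ x + ε) ρ ∧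
      HasRotNum ω (fun θ x => F θ x + (-ε)) ρ) :
    ∃ (N : ℕ), 1 ≤ N ∧ ∃ e : T1 × Set.Icc (0 : ℝ) 1 → T1 × T1,
      Continuous e ∧ Function.Injective e ∧
      f^[N] '' Set.range e ⊆ interior (Set.range e) := by
  obtain ⟨ε, hε, hupper, hlower⟩ := hlock
  obtain ⟨C, hdev⟩ := hF.exists_hasBoundedDeviation hω hε hupper hlower
  obtain ⟨σ, q, k, hq, hrel⟩ := hdev.exists_rat_relation hF hω hε
  set H := hF.reducedLift σ q k
  have hH : IsQpfLift (q * (ω / σ.den)) H := hF.isQpfLift_reducedLift σ q k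
  have hα : Irrational (q * (ω / σ.den)) :=
    (hω.div_natCast σ.den_nz).natCast_mul (Nat.one_le_iff_ne_zero.1 hq)
  have hdevH : HasBoundedDeviation (q * (ω / σ.den)) H 0 ε C := hdev.reducedLift hF hε.le hq hrel
  obtain ⟨N, c, l, u, hN, hl, hlu, hu, htrap⟩ :=
    hdevH.exists_trapping_strip hH hα hε (inv_pos.2 (Nat.cast_pos.2 σ.pos))
  have hinj : Set.InjOn (coverProj σ) (closedStrip l u) :=
    injOn_coverProj_closedStrip (hH.shift (-ε)) hdevH.lower
      (fun _ _ => hF.shift_reducedLift_add_of_coverProj_eq_zero q k (-ε)) hl hu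
  obtain ⟨e, he, he_inj, htrap⟩ := exists_annulus_of_semiconj (continuous_coverProj σ)
    (isOpenMap_coverProj σ) l.continuous u.continuous hlu hinj
    ((hF.semiconj_coverProj_reducedLift hproj σ q k).iterate_right N)
    (fun p hp => by
      rw [iterate_skewProduct]
      exact htrap p.1 p.2 hp)
  rw [← Function.iterate_mul] at htrap
  exact ⟨q * N, Nat.mul_pos hq hN, e, he, he_inj, htrap⟩
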